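/- arXiv:1808.04948 — 2 statements merged into one kernel-verified Lean document; each statement's English description precedes it below -/
import Mathlib

section
/- Fix K ∈ ℕ with K ≥ 1, and let P_K := ∏_{k=1}^{K} ∏_{(T,v) ∈ 𝓕_k} g(T,v)^{f_K(k)}. Then for every ε > 0, asymptotically almost surely c(𝒯_n) ≤ (2^{h(K)} · P_K + ε)^n. -/
/-!
Root the tree at a fixed vertex and encode it by its parent map `p`. For a vertex `v` let `g(v)`
(`gnum`) be one plus the number of subtrees with topmost vertex `v`; it depends only on the fringe
subtree at `v`, and `g(v) = 1 + ∏ g(w)` over the children `w` of `v` (`IsTF.gnum_rec`). Hence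
`g(v)` is the product of `g(x) / (g(x) - 1)` over all descendants `x` of `v`. Each factor is at most
`2`; keeping it for fringe subtrees with at most `K` vertices and replacing it by `2` elsewhere
yields `c(T) ≤ ∑ g(v) ≤ n · 2 ^ n · exp Z`, where `Z = Zsum K phi` is the sum of
`log (g / (g - 1)) - log 2` over the vertices with fringe subtree of size at most `K`
(`IsTF.subtreeCount_le_exp`).

The functional `Z` is concentrated. A tree with a marked non-root vertex is the same as a fringe
subtree on a label set, a tree on the remaining labels and a vertex of attachment (`sum_glue`).
With Cayley's formula (`card_TF`) this gives an exact first moment (`first_moment`), and, since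
removing a small fringe subtree hardly changes `Z` on average (`Zsum_glue_diff`), a bound for the
second moment (`second_moment`). By the Poisson limit theorem the mean of `Z` is asymptotic to
`mu K · n`, with weight `e^(-k) / k!` on each rooted tree on `k` vertices, and the second moment is at
most `(mu K ^ 2 + o(1)) n ^ 2`; Chebyshev's inequality then shows `Z ≤ (mu K + δ) n` asymptotically
almost surely.

Finally `2 ^ (hfun K) * PK K = exp (log 2 + mu K)` (`two_rpow_mul_PK`): decomposing the trees on `l`
vertices at the root expresses the sum of `log (g - 1)` over them through the sums of `log g` over
smaller trees (`Gsum_log_pred`), and this produces exactly the correction terms in `fK`.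
-/

open Filter Topology
open scoped Classical

/-- The number of subtrees of a graph `G` on `Fin n`: the number of (nonempty) vertex
subsets inducing a connected subgraph. -/
noncomputable def subtreeCount {n : ℕ} (G : SimpleGraph (Fin n)) : ℕ :=
  Nat.card {S : Set (Fin n) // (G.induce S).Connected}

/-- The probability that a uniformly random labelled tree on `n` vertices satisfies `p`. -/
noncomputable def treeProb (n : ℕ) (p : SimpleGraph (Fin n) → Prop) : ℝ :=
  (Nat.card {G : SimpleGraph (Fin n) // G.IsTree ∧ p G} : ℝ) /
    (Nat.card {G : SimpleGraph (Fin n) // G.IsTree} : ℝ)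

/-- `g(T,v)`: one plus the number of subtrees of `T` containing `v`. -/
noncomputable def gval {k : ℕ} (T : SimpleGraph (Fin k)) (v : Fin k) : ℕ :=
  1 + Nat.card {S : Set (Fin k) // v ∈ S ∧ (T.induce S).Connected}

/-- `f_K(k) = e^{-k}/k! - ∑_{ℓ=k+1}^K (ℓ-k)^{ℓ-k-1} C(ℓ, ℓ-k) e^{-ℓ}/ℓ!`. -/
noncomputable def fK (K k : ℕ) : ℝ :=
  Real.exp (-(k : ℝ)) / (Nat.factorial k) -
    ∑ l ∈ Finset.Icc (k + 1) K,
      ((l - k : ℕ) : ℝ) ^ (l - k - 1) * (Nat.choose l (l - k)) *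
        Real.exp (-(l : ℝ)) / (Nat.factorial l)

/-- `h(K) = 1 - ∑_{k=1}^K k^{k-1} e^{-k}/k!`. -/
noncomputable def hfun (K : ℕ) : ℝ :=
  1 - ∑ k ∈ Finset.Icc 1 K, (k : ℝ) ^ (k - 1) * Real.exp (-(k : ℝ)) / (Nat.factorial k)

/-- `P_K = ∏_{k=1}^K ∏_{(T,v) ∈ 𝓕_k} g(T,v)^{f_K(k)}`. -/
noncomputable def PK (K : ℕ) : ℝ :=
  ∏ k ∈ Finset.Icc 1 K,
    ∏ T : SimpleGraph (Fin k), ∏ v : Fin k,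
      if T.IsTree then ((gval T v : ℝ)) ^ (fK K k) else 1

/-! ### Parent maps and fringe subtrees -/

section Basics
variable {V : Type}

/-- `p` is the parent map of a tree rooted at `r`: the root is its own parent, and iterating `p`
leads from every vertex to `r`. -/
def IsTF (r : V) (p : V → V) : Prop := p r = r ∧ ∀ x, ∃ i : ℕ, p^[i] x = r

lemma IsTF.iterate_root {r : V} {p : V → V} (h : IsTF r p) (i : ℕ) : p^[i] r = r :=
  Function.iterate_fixed h.1 i

variable [Fintype V]

/-- All parent maps of trees on `V` rooted at `r`. -/
noncomputable def TF (r : V) : Finset (V → V) := Finset.univ.filter (IsTF r)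

/-- The descendants of `v`, including `v` itself: the vertex set of the fringe subtree at `v`. -/
noncomputable def desc (p : V → V) (v : V) : Finset V :=
  Finset.univ.filter fun x => ∃ i : ℕ, p^[i] x = v

/-- The children of `v`. The condition `w ≠ v` only matters at the root, its own parent. -/
noncomputable def children (p : V → V) (v : V) : Finset V :=
  Finset.univ.filter fun w => p w = v ∧ w ≠ v

/-- The sets of descendants of `v` that contain, with each vertex other than `v`, its parent. These
are `∅` and the vertex sets of the subtrees whose topmost vertex is `v`. -/
noncomputable def closedSets (p : V → V) (v : V) : Finset (Finset V) :=
  Finset.univ.filter fun S => S ⊆ desc p v ∧ ∀ x ∈ S, x ≠ v → p x ∈ S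

/-- One plus the number of subtrees whose topmost vertex is `v`; the empty set in `closedSets` plays
the part of the summand `1` in `g(T,v)`. -/
noncomputable def gnum (p : V → V) (v : V) : ℕ := (closedSets p v).card

lemma mem_TF {r : V} {p : V → V} : p ∈ TF r ↔ IsTF r p := by simp [TF]

lemma mem_desc {p : V → V} {v x : V} : x ∈ desc p v ↔ ∃ i : ℕ, p^[i] x = v := by simp [desc]

lemma mem_children {p : V → V} {v w : V} : w ∈ children p v ↔ p w = v ∧ w ≠ v := by
  simp [children]

lemma mem_closedSets {p : V → V} {v : V} {S : Finset V} :
    S ∈ closedSets p v ↔ S ⊆ desc p v ∧ ∀ x ∈ S, x ≠ v → p x ∈ S := by simp [closedSets]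

lemma self_mem_desc (p : V → V) (v : V) : v ∈ desc p v := mem_desc.2 ⟨0, rfl⟩

lemma desc_trans {p : V → V} {x v w : V} (h1 : x ∈ desc p v) (h2 : v ∈ desc p w) :
    x ∈ desc p w := by
  obtain ⟨i, hi⟩ := mem_desc.1 h1
  obtain ⟨j, hj⟩ := mem_desc.1 h2
  exact mem_desc.2 ⟨j + i, by rw [Function.iterate_add_apply, hi, hj]⟩

lemma desc_of_step {p : V → V} {x v : V} (h : p x ∈ desc p v) : x ∈ desc p v := by
  obtain ⟨i, hi⟩ := mem_desc.1 h
  exact mem_desc.2 ⟨i + 1, by simpa using hi⟩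

lemma step_mem_desc {p : V → V} {x v : V} (h : x ∈ desc p v) (hx : x ≠ v) : p x ∈ desc p v := by
  obtain ⟨i, hi⟩ := mem_desc.1 h
  cases i with
  | zero => exact absurd hi hx
  | succ i => exact mem_desc.2 ⟨i, by simpa using hi⟩

/-- Ancestors of a common vertex are comparable. -/
lemma desc_total {p : V → V} {x u v : V} (hu : x ∈ desc p u) (hv : x ∈ desc p v) :
    u ∈ desc p v ∨ v ∈ desc p u := by
  obtain ⟨i, hi⟩ := mem_desc.1 hu
  obtain ⟨j, hj⟩ := mem_desc.1 hv
  rcases le_total i j with h | h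
  · left
    refine mem_desc.2 ⟨j - i, ?_⟩
    rw [← hi, ← Function.iterate_add_apply, Nat.sub_add_cancel h, hj]
  · right
    refine mem_desc.2 ⟨i - j, ?_⟩
    rw [← hj, ← Function.iterate_add_apply, Nat.sub_add_cancel h, hi]

lemma IsTF.desc_root {r : V} {p : V → V} (h : IsTF r p) : desc p r = Finset.univ := by
  ext x; simpa [mem_desc] using h.2 x

/-- Parent maps of trees have no cycle except the loop at the root. -/
lemma IsTF.desc_antisymm {r : V} {p : V → V} (h : IsTF r p) {u v : V} (h1 : u ∈ desc p v)
    (h2 : v ∈ desc p u) : u = v := by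
  obtain ⟨i, hi⟩ := mem_desc.1 h1
  obtain ⟨j, hj⟩ := mem_desc.1 h2
  rcases Nat.eq_zero_or_pos (j + i) with h0 | h0
  · have : i = 0 := by omega
    subst this; exact hi
  · have hper : p^[j + i] u = u := by rw [Function.iterate_add_apply, hi, hj]
    obtain ⟨m, hm⟩ := h.2 u
    have hper2 : p^[(j + i) * m] u = u := by
      rw [Function.iterate_mul]; exact Function.iterate_fixed hper m
    have hur : u = r := by
      rw [← hper2, ← Nat.sub_add_cancel (Nat.le_mul_of_pos_left m h0),
        Function.iterate_add_apply, hm, h.iterate_root]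
    rw [← hi, hur, h.iterate_root]

lemma child_mem_desc {p : V → V} {v w : V} (h : w ∈ children p v) : w ∈ desc p v :=
  mem_desc.2 ⟨1, (mem_children.1 h).1⟩

lemma IsTF.not_mem_desc_child {r : V} {p : V → V} (h : IsTF r p) {v w : V}
    (hw : w ∈ children p v) : v ∉ desc p w := fun hv =>
  (mem_children.1 hw).2 (h.desc_antisymm (child_mem_desc hw) hv)

lemma IsTF.desc_children_disjoint {r : V} {p : V → V} (h : IsTF r p) {v w w' x : V}
    (hw : w ∈ children p v) (hw' : w' ∈ children p v) (hx : x ∈ desc p w)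
    (hx' : x ∈ desc p w') : w = w' := by
  by_contra hne
  rcases desc_total hx hx' with hh | hh
  · have := step_mem_desc hh hne
    rw [(mem_children.1 hw).1] at this
    exact h.not_mem_desc_child hw' this
  · have := step_mem_desc hh (Ne.symm hne)
    rw [(mem_children.1 hw').1] at this
    exact h.not_mem_desc_child hw this

lemma mem_desc_iff_child {p : V → V} {v x : V} :
    x ∈ desc p v ↔ x = v ∨ ∃ w ∈ children p v, x ∈ desc p w := by
  constructor
  · intro hx
    obtain ⟨i, hi⟩ := mem_desc.1 hx
    induction i generalizing x with
    | zero => exact Or.inl hi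
    | succ i ih =>
      by_cases hxv : x = v
      · exact Or.inl hxv
      right
      rw [Function.iterate_succ_apply] at hi
      rcases ih (mem_desc.2 ⟨i, hi⟩) hi with hp | ⟨w, hw, hpw⟩
      · exact ⟨x, mem_children.2 ⟨hp, hxv⟩, self_mem_desc p x⟩
      · exact ⟨w, hw, desc_of_step hpw⟩
  · rintro (rfl | ⟨w, hw, hx⟩)
    · exact self_mem_desc p x
    · exact desc_trans hx (child_mem_desc hw)

lemma closedSets_top_mem {p : V → V} {v x : V} {S : Finset V} (hS : S ∈ closedSets p v)
    (hx : x ∈ S) : v ∈ S := by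
  obtain ⟨h1, h2⟩ := mem_closedSets.1 hS
  obtain ⟨i, hi⟩ := mem_desc.1 (h1 hx)
  induction i generalizing x with
  | zero => exact hi ▸ hx
  | succ i ih =>
    by_cases hxv : x = v
    · exact hxv ▸ hx
    · exact ih (h2 x hx hxv) (by simpa using hi)

lemma empty_mem_closedSets (p : V → V) (v : V) : ∅ ∈ closedSets p v := by
  simp [mem_closedSets]

lemma singleton_mem_closedSets (p : V → V) (v : V) : {v} ∈ closedSets p v := by
  simp [mem_closedSets, self_mem_desc]

lemma two_le_gnum (p : V → V) (v : V) : 2 ≤ gnum p v := by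
  have : ({∅, {v}} : Finset (Finset V)) ⊆ closedSets p v := by
    intro S hS
    simp only [Finset.mem_insert, Finset.mem_singleton] at hS
    rcases hS with rfl | rfl
    · exact empty_mem_closedSets p v
    · exact singleton_mem_closedSets p v
  have h2 := Finset.card_le_card this
  rwa [Finset.card_pair (Finset.singleton_ne_empty v).symm] at h2

/-- A nonempty closed set below `v` is `v` together with an arbitrary choice of one closed set
below each child. -/
lemma IsTF.gnum_rec {r : V} {p : V → V} (h : IsTF r p) (v : V) :
    gnum p v = 1 + ∏ w ∈ children p v, gnum p w := by
  have key : ((closedSets p v).erase ∅).card =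
      (Fintype.piFinset fun w => if w ∈ children p v then closedSets p w else {∅}).card := by
    refine Finset.card_nbij' (fun S w => if w ∈ children p v then S ∩ desc p w else ∅)
      (fun F => insert v (Finset.univ.biUnion F)) ?_ ?_ ?_ ?_
    · intro S hS
      simp only [Finset.coe_erase, Set.mem_sdiff, Finset.mem_coe, Set.mem_singleton_iff] at hS
      rw [Finset.mem_coe, Fintype.mem_piFinset]
      intro w
      by_cases hw : w ∈ children p v
      · simp only [hw, if_true]
        refine mem_closedSets.2 ⟨Finset.inter_subset_right, fun x hx hxw => ?_⟩
        rw [Finset.mem_inter] at hx ⊢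
        refine ⟨(mem_closedSets.1 hS.1).2 x hx.1 ?_, step_mem_desc hx.2 hxw⟩
        rintro rfl
        exact h.not_mem_desc_child hw hx.2
      · simp [hw]
    · intro F hF
      rw [Finset.mem_coe, Fintype.mem_piFinset] at hF
      simp only [Finset.coe_erase, Set.mem_sdiff, Finset.mem_coe, Set.mem_singleton_iff]
      refine ⟨mem_closedSets.2 ⟨?_, ?_⟩, Finset.insert_ne_empty _ _⟩
      · intro x hx
        rw [Finset.mem_insert, Finset.mem_biUnion] at hx
        rcases hx with rfl | ⟨w, -, hx⟩
        · exact self_mem_desc p x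
        · have hFw := hF w
          by_cases hw : w ∈ children p v
          · simp only [hw, if_true] at hFw
            exact desc_trans ((mem_closedSets.1 hFw).1 hx) (child_mem_desc hw)
          · simp only [hw, if_false, Finset.mem_singleton] at hFw
            simp [hFw] at hx
      · intro x hx hxv
        rw [Finset.mem_insert, Finset.mem_biUnion] at hx
        rcases hx with rfl | ⟨w, -, hx⟩
        · exact absurd rfl hxv
        · have hFw := hF w
          by_cases hw : w ∈ children p v
          · simp only [hw, if_true] at hFw
            rw [Finset.mem_insert, Finset.mem_biUnion]
            by_cases hxw : x = w
            · left; rw [hxw]; exact (mem_children.1 hw).1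
            · right; exact ⟨w, Finset.mem_univ _, (mem_closedSets.1 hFw).2 x hx hxw⟩
          · simp only [hw, if_false, Finset.mem_singleton] at hFw
            simp [hFw] at hx
    · intro S hS
      simp only [Finset.coe_erase, Set.mem_sdiff, Finset.mem_coe, Set.mem_singleton_iff] at hS
      obtain ⟨x0, hx0⟩ := Finset.nonempty_iff_ne_empty.2 hS.2
      have hv := closedSets_top_mem hS.1 hx0
      ext x
      simp only [Finset.mem_insert, Finset.mem_biUnion, Finset.mem_univ, true_and]
      constructor
      · rintro (rfl | ⟨w, hx⟩)
        · exact hv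
        · by_cases hw : w ∈ children p v
          · simp only [hw, if_true, Finset.mem_inter] at hx; exact hx.1
          · simp [hw] at hx
      · intro hx
        rcases mem_desc_iff_child.1 ((mem_closedSets.1 hS.1).1 hx) with h1 | ⟨w, hw, h1⟩
        · exact Or.inl h1
        · right; exact ⟨w, by simp [hw, hx, h1]⟩
    · intro F hF
      rw [Finset.mem_coe, Fintype.mem_piFinset] at hF
      funext w
      by_cases hw : w ∈ children p v
      · have hFw := hF w
        simp only [hw, if_true] at hFw ⊢
        ext x
        simp only [Finset.mem_inter, Finset.mem_insert, Finset.mem_biUnion, Finset.mem_univ,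
          true_and]
        constructor
        · rintro ⟨rfl | ⟨w', hx⟩, hxw⟩
          · exact absurd hxw (h.not_mem_desc_child hw)
          · have hFw' := hF w'
            by_cases hw' : w' ∈ children p v
            · simp only [hw', if_true] at hFw'
              have := h.desc_children_disjoint hw hw' hxw ((mem_closedSets.1 hFw').1 hx)
              rwa [this]
            · simp only [hw', if_false, Finset.mem_singleton] at hFw'
              simp [hFw'] at hx
        · intro hx
          exact ⟨Or.inr ⟨w, hx⟩, (mem_closedSets.1 hFw).1 hx⟩
      · have hFw := hF w
        simp only [hw, if_false, Finset.mem_singleton] at hFw ⊢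
        exact hFw.symm
  rw [Finset.card_erase_of_mem (empty_mem_closedSets p v), Fintype.card_piFinset] at key
  have h2 : ∏ w, (if w ∈ children p v then closedSets p w else {∅}).card =
      ∏ w ∈ children p v, gnum p w := by
    rw [← Finset.prod_filter_mul_prod_filter_not Finset.univ (· ∈ children p v)]
    rw [Finset.filter_mem_eq_inter, Finset.univ_inter]
    rw [Finset.prod_congr rfl (g := fun w => gnum p w) (by intro w hw; simp [hw, gnum])]
    rw [Finset.prod_eq_one (s := Finset.univ.filter fun w => w ∉ children p v)
      (by intro w hw; simp [(Finset.mem_filter.1 hw).2]), mul_one]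
  have h3 := two_le_gnum p v
  rw [← h2, ← key]
  unfold gnum at *
  omega

/-- Each vertex contributes the factor by which it enlarges the product over its children. -/
lemma IsTF.gnum_le_prod {r : V} {p : V → V} (h : IsTF r p) (α : V → ℝ)
    (hα : ∀ v, (gnum p v : ℝ) ≤ α v * (gnum p v - 1)) (h0 : ∀ v, 0 ≤ α v) (v : V) :
    (gnum p v : ℝ) ≤ ∏ x ∈ desc p v, α x := by
  induction hn : (desc p v).card using Nat.strong_induction_on generalizing v with
  | _ n ih =>
  have hdec : desc p v = insert v ((children p v).biUnion (desc p)) := by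
    ext x
    rw [mem_desc_iff_child]; simp
  have hnot : v ∉ (children p v).biUnion (desc p) := by
    rw [Finset.mem_biUnion]
    rintro ⟨w, hw, hv⟩
    exact h.not_mem_desc_child hw hv
  have hdisj : Set.PairwiseDisjoint (↑(children p v)) (desc p) := by
    intro w hw w' hw' hne
    rw [Function.onFun, Finset.disjoint_left]
    intro x hx hx'
    exact hne (h.desc_children_disjoint hw hw' hx hx')
  rw [hdec, Finset.prod_insert hnot, Finset.prod_biUnion hdisj]
  refine (hα v).trans (mul_le_mul_of_nonneg_left ?_ (h0 v))
  rw [h.gnum_rec v]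
  push_cast
  rw [add_sub_cancel_left]
  refine Finset.prod_le_prod (fun _ _ => Nat.cast_nonneg _) fun w hw => ?_
  refine ih _ ?_ w rfl
  rw [← hn]
  refine Finset.card_lt_card ⟨fun x hx => desc_trans hx (child_mem_desc hw), fun hsub => ?_⟩
  exact h.not_mem_desc_child hw (hsub (self_mem_desc p v))

/-- Invariance of descendant sets and closed-set counts under an embedding that intertwines the
parent maps below `w`. -/
lemma gnum_transfer {U : Type} [Fintype U] (e : U ↪ V) (q : U → U) (p : V → V) (w : U)
    (hD : desc p (e w) = (desc q w).map e)
    (hp : ∀ x ∈ desc q w, x ≠ w → p (e x) = e (q x)) : gnum p (e w) = gnum q w := by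
  unfold gnum
  symm
  refine Finset.card_bij (fun S _ => S.map e) ?_ ?_ ?_
  · intro S hS
    obtain ⟨h1, h2⟩ := mem_closedSets.1 hS
    refine mem_closedSets.2 ⟨by rw [hD]; exact Finset.map_subset_map.2 h1, ?_⟩
    intro y hy hne
    obtain ⟨x, hx, rfl⟩ := Finset.mem_map.1 hy
    have hxw : x ≠ w := fun h => hne (by rw [h])
    rw [hp x (h1 hx) hxw]
    exact Finset.mem_map_of_mem e (h2 x hx hxw)
  · intro S _ S' _ h
    exact Finset.map_injective e h
  · intro T hT
    obtain ⟨h1, h2⟩ := mem_closedSets.1 hT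
    rw [hD, Finset.subset_map_iff] at h1
    obtain ⟨S, hS, rfl⟩ := h1
    refine ⟨S, mem_closedSets.2 ⟨hS, fun x hx hxw => ?_⟩, rfl⟩
    have := h2 (e x) (Finset.mem_map_of_mem e hx) (fun h => hxw (e.injective h))
    rw [hp x (hS hx) hxw] at this
    exact (Finset.mem_map' e).1 this

end Basics

/-! ### Labelled trees as parent maps -/

section Graphs
variable {V : Type}

/-- The undirected graph of a parent map; the loop at the root disappears. -/
def graphOf (p : V → V) : SimpleGraph V := SimpleGraph.fromRel fun x y => p x = y

lemma graphOf_adj {p : V → V} {x y : V} : (graphOf p).Adj x y ↔ x ≠ y ∧ (p x = y ∨ p y = x) := by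
  simp [graphOf]

lemma graphOf_reachable_iterate (p : V → V) (x : V) (i : ℕ) :
    (graphOf p).Reachable x (p^[i] x) := by
  induction i with
  | zero => exact SimpleGraph.Reachable.refl _
  | succ i ih =>
    rw [Function.iterate_succ_apply']
    refine ih.trans ?_
    by_cases h : p^[i] x = p (p^[i] x)
    · rw [← h]
    · exact (graphOf_adj.2 ⟨h, Or.inl rfl⟩).reachable

lemma IsTF.graphOf_connected {r : V} {p : V → V} (h : IsTF r p) : (graphOf p).Connected := by
  refine (SimpleGraph.connected_iff_exists_forall_reachable _).2 ⟨r, fun x => ?_⟩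
  obtain ⟨i, hi⟩ := h.2 x
  exact hi ▸ (graphOf_reachable_iterate p x i).symm

lemma IsTF.graphOf_injective {r : V} {p q : V → V} (hp : IsTF r p) (hq : IsTF r q)
    (h : graphOf p = graphOf q) : p = q := by
  have key : ∀ i x, p^[i] x = r → p x = q x := by
    intro i
    induction i with
    | zero =>
      intro x hx
      have hx : x = r := hx
      rw [hx, hp.1, hq.1]
    | succ i ih =>
      intro x hx
      rw [Function.iterate_succ_apply] at hx
      have ihy := ih (p x) hx
      by_cases hxp : x = p x
      · have : x = r := by
          obtain ⟨j, hj⟩ := hp.2 x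
          rw [← hj]; exact (Function.iterate_fixed hxp.symm j).symm
        rw [this, hp.1, hq.1]
      have hadj : (graphOf q).Adj x (p x) := h ▸ graphOf_adj.2 ⟨hxp, Or.inl rfl⟩
      rcases (graphOf_adj.1 hadj).2 with h1 | h1
      · exact h1.symm
      -- otherwise `x` and `p x` would form a 2-cycle of `p`
      exfalso
      rw [← ihy] at h1
      have hcyc : ∀ j, p^[j] x = x ∨ p^[j] x = p x := by
        intro j
        induction j with
        | zero => exact Or.inl rfl
        | succ j ihj =>
          rw [Function.iterate_succ_apply']
          rcases ihj with hj | hj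
          · right; rw [hj]
          · left; rw [hj, h1]
      obtain ⟨j, hj⟩ := hp.2 x
      rcases hcyc j with h2 | h2
      · rw [hj] at h2; rw [← h2, hp.1] at hxp; exact hxp rfl
      · rw [hj] at h2; rw [← h2, hp.1] at h1; rw [← h1, hp.1] at hxp; exact hxp rfl
  funext x
  obtain ⟨i, hi⟩ := hp.2 x
  exact key i x hi

/-- A tree is rooted at `r` by sending each vertex to a neighbour closer to `r`; the resulting graph
is a connected subgraph, hence the whole tree by minimality. -/
lemma exists_TF_of_isTree {G : SimpleGraph V} (hG : G.IsTree) (r : V) :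
    ∃ p, IsTF r p ∧ graphOf p = G := by
  have hstep : ∀ x, ∃ y, (x = r → y = r) ∧ (x ≠ r → G.Adj x y ∧ G.dist y r < G.dist x r) := by
    intro x
    by_cases hx : x = r
    · exact ⟨r, fun _ => rfl, fun h => absurd hx h⟩
    obtain ⟨w, hw⟩ := hG.connected.exists_walk_length_eq_dist x r
    cases w with
    | nil => exact absurd rfl hx
    | cons hadj w' =>
      refine ⟨_, fun h => absurd h hx, fun _ => ⟨hadj, ?_⟩⟩
      have := SimpleGraph.dist_le w'
      rw [SimpleGraph.Walk.length_cons] at hw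
      omega
  choose p hp1 hp2 using hstep
  have hTF : IsTF r p := by
    refine ⟨hp1 r rfl, fun x => ?_⟩
    induction hn : G.dist x r using Nat.strong_induction_on generalizing x with
    | _ n ih =>
    by_cases hx : x = r
    · exact ⟨0, hx⟩
    obtain ⟨i, hi⟩ := ih _ (hn ▸ (hp2 x hx).2) (p x) rfl
    exact ⟨i + 1, by simpa using hi⟩
  refine ⟨p, hTF, ?_⟩
  have hle : graphOf p ≤ G := by
    intro x y hxy
    obtain ⟨hne, hxy⟩ := graphOf_adj.1 hxy
    rcases hxy with h | h
    · have : x ≠ r := fun hx => hne (by rw [← h, hx, hp1 r rfl])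
      exact h ▸ (hp2 x this).1
    · have : y ≠ r := fun hx => hne (by rw [← h, hx, hp1 r rfl])
      exact h ▸ (hp2 y this).1.symm
  exact le_antisymm hle ((SimpleGraph.isTree_iff_minimal_connected.1 hG).2
    hTF.graphOf_connected hle)

variable [Fintype V]

lemma IsTF.graphOf_isTree {r : V} {p : V → V} (h : IsTF r p) : (graphOf p).IsTree := by
  rw [SimpleGraph.isTree_iff_connected_and_card]
  refine ⟨h.graphOf_connected, ?_⟩
  have h1 := h.graphOf_connected.card_vert_le_card_edgeSet_add_one
  have h2 : Nat.card (graphOf p).edgeSet ≤ Nat.card V - 1 := by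
    have hsub : (graphOf p).edgeSet ⊆
        ((Finset.univ.erase r).image fun x => s(x, p x) : Finset (Sym2 V)) := by
      intro e
      induction e with
      | _ x y =>
      intro he
      rw [SimpleGraph.mem_edgeSet, graphOf_adj] at he
      obtain ⟨hne, he⟩ := he
      simp only [Finset.coe_image, Set.mem_image, Finset.mem_coe, Finset.mem_erase,
        Finset.mem_univ, and_true]
      rcases he with he | he
      · refine ⟨x, fun hx => hne ?_, by rw [he]⟩
        rw [← he, hx, h.1]
      · refine ⟨y, fun hy => hne ?_, by rw [he, Sym2.eq_swap]⟩
        rw [← he, hy, h.1]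
    have h3 := Nat.card_mono (Finset.finite_toSet _) hsub
    refine h3.trans ?_
    simp only [Nat.card_eq_fintype_card, Finset.coe_sort_coe, Fintype.card_coe]
    refine Finset.card_image_le.trans ?_
    rw [Finset.card_erase_of_mem (Finset.mem_univ _), Finset.card_univ]
  have h3 : 0 < Nat.card V := by
    have : Nonempty V := ⟨r⟩
    exact Nat.card_pos
  omega

/-- Rooting at `r` identifies labelled trees with parent maps. -/
lemma filter_isTree_eq_image (r : V) :
    (Finset.univ.filter fun G : SimpleGraph V => G.IsTree) = (TF r).image graphOf := by
  ext G
  simp only [Finset.mem_filter, Finset.mem_univ, true_and, Finset.mem_image, mem_TF]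
  constructor
  · exact fun h => exists_TF_of_isTree h r
  · rintro ⟨p, hp, rfl⟩
    exact hp.graphOf_isTree

lemma graphOf_injOn (r : V) : Set.InjOn graphOf (↑(TF r) : Set (V → V)) := by
  intro p hp q hq h
  exact (mem_TF.1 hp).graphOf_injective (mem_TF.1 hq) h

/-- If a connected set leaves through the edge from `x` to its parent, it lies below `x`. -/
lemma subset_desc_of_connected {p : V → V} {S : Set V} (hS : ((graphOf p).induce S).Connected)
    {x y : V} (hx : x ∈ S) (hpx : p x ∉ S) (hy : y ∈ S) : y ∈ desc p x := by
  obtain ⟨w⟩ := hS.preconnected ⟨x, hx⟩ ⟨y, hy⟩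
  suffices H : ∀ (a b : S), ((graphOf p).induce S).Walk a b → (a : V) ∈ desc p x →
      (b : V) ∈ desc p x from H _ _ w (self_mem_desc p x)
  intro a b w
  induction w with
  | nil => exact id
  | @cons a c b hadj w ih =>
    intro ha
    refine ih ?_
    rw [SimpleGraph.comap_adj] at hadj
    rcases (graphOf_adj.1 hadj).2 with h | h
    · by_cases hax : (a : V) = x
      · exfalso
        apply hpx
        rw [← hax]
        have : p (a : V) = c := h
        rw [this]; exact c.2
      · have : p (a : V) = c := h
        exact this ▸ step_mem_desc ha hax
    · have : p (c : V) = a := h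
      exact desc_of_step (this ▸ ha)

/-- A connected set is closed below its topmost vertex, the one with the most descendants. -/
lemma IsTF.connected_set {r : V} {p : V → V} (h : IsTF r p) {S : Set V}
    (hS : ((graphOf p).induce S).Connected) : ∃ v ∈ S, S.toFinset ∈ closedSets p v := by
  obtain ⟨⟨x0, hx0⟩⟩ := hS.nonempty
  obtain ⟨v, hvS, hmax⟩ := Finset.exists_max_image S.toFinset (fun x => (desc p x).card)
    ⟨x0, by simpa using hx0⟩
  have hvS' : v ∈ S := by simpa using hvS
  have hclosed : ∀ x ∈ S, x ≠ v → p x ∈ S := by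
    intro x hx hxv
    by_contra hpx
    have hv := subset_desc_of_connected hS hx hpx hvS'
    have hsub : desc p v ⊆ desc p x := fun y hy => desc_trans hy hv
    have heq := Finset.eq_of_subset_of_card_le hsub (hmax x (by simpa using hx))
    exact hxv (h.desc_antisymm (heq ▸ self_mem_desc p x) hv)
  refine ⟨v, hvS', mem_closedSets.2 ⟨fun y hy => ?_, fun x hx hxv => ?_⟩⟩
  · have hy : y ∈ S := by simpa using hy
    by_cases hpv : p v ∈ S
    · have hvp : v ∈ desc p (p v) := mem_desc.2 ⟨1, rfl⟩
      have hsub : desc p v ⊆ desc p (p v) := fun y hy => desc_trans hy hvp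
      have heq := Finset.eq_of_subset_of_card_le hsub (hmax (p v) (by simpa using hpv))
      have hfix : v = p v := h.desc_antisymm hvp (heq ▸ self_mem_desc p (p v))
      have hvr : v = r := by
        obtain ⟨j, hj⟩ := h.2 v
        rw [← hj]; exact (Function.iterate_fixed hfix.symm j).symm
      rw [hvr, h.desc_root]; exact Finset.mem_univ _
    · exact subset_desc_of_connected hS hvS' hpv hy
  · simpa using hclosed x (by simpa using hx) hxv

lemma connected_of_closed {p : V → V} {v : V} {S : Set V} (hS : S.toFinset ∈ closedSets p v)
    (hne : v ∈ S) : ((graphOf p).induce S).Connected := by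
  obtain ⟨h1, h2⟩ := mem_closedSets.1 hS
  refine (SimpleGraph.connected_iff_exists_forall_reachable _).2 ⟨⟨v, hne⟩, ?_⟩
  rintro ⟨x, hx⟩
  obtain ⟨i, hi⟩ := mem_desc.1 (h1 (Set.mem_toFinset.2 hx))
  induction i generalizing x with
  | zero =>
    have hi : x = v := hi
    subst hi; exact SimpleGraph.Reachable.refl _
  | succ i ih =>
    by_cases hxv : x = v
    · subst hxv; exact SimpleGraph.Reachable.refl _
    have hpx : p x ∈ S := Set.mem_toFinset.1 (h2 x (Set.mem_toFinset.2 hx) hxv)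
    refine (ih (p x) hpx (by simpa using hi)).trans ?_
    by_cases hfix : p x = x
    · have : (⟨p x, hpx⟩ : S) = ⟨x, hx⟩ := Subtype.ext hfix
      rw [this]
    · refine SimpleGraph.Adj.reachable ?_
      rw [SimpleGraph.comap_adj]
      exact graphOf_adj.2 ⟨hfix, Or.inr rfl⟩

lemma IsTF.gval_eq {k : ℕ} {v : Fin k} {p : Fin k → Fin k} (h : IsTF v p) :
    gval (graphOf p) v = gnum p v := by
  have h1 : Nat.card {S : Set (Fin k) // v ∈ S ∧ ((graphOf p).induce S).Connected} =
      ((closedSets p v).erase ∅).card := by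
    rw [← Fintype.card_coe, ← Nat.card_eq_fintype_card]
    refine Nat.card_congr
      { toFun := fun S => ⟨S.1.toFinset, ?_⟩
        invFun := fun S => ⟨(S.1 : Set (Fin k)), ?_⟩
        left_inv := ?_
        right_inv := ?_ }
    · obtain ⟨S, hv, hS⟩ := S
      refine Finset.mem_erase.2 ⟨?_, mem_closedSets.2 ⟨?_, ?_⟩⟩
      · exact Finset.ne_empty_of_mem (Set.mem_toFinset.2 hv)
      · rw [h.desc_root]; exact Finset.subset_univ _
      · intro x hx hxv
        by_contra hpx
        rw [Set.mem_toFinset] at hx hpx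
        exact hxv (h.desc_antisymm (by rw [h.desc_root]; exact Finset.mem_univ _)
          (subset_desc_of_connected hS hx hpx hv))
    · obtain ⟨S, hS⟩ := S
      obtain ⟨hne, hS⟩ := Finset.mem_erase.1 hS
      obtain ⟨x, hx⟩ := Finset.nonempty_iff_ne_empty.2 hne
      have hv := closedSets_top_mem hS hx
      exact ⟨by simpa using hv, connected_of_closed (by simpa using hS) (by simpa using hv)⟩
    · intro S; ext; simp
    · intro S; ext; simp
  have h2 := two_le_gnum p v
  unfold gval
  rw [h1, Finset.card_erase_of_mem (empty_mem_closedSets p v)]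
  unfold gnum at *
  omega

/-- Subtrees are counted according to their topmost vertex. -/
lemma IsTF.subtreeCount_le {n : ℕ} {r : Fin n} {p : Fin n → Fin n} (h : IsTF r p) :
    subtreeCount (graphOf p) ≤ ∑ v, gnum p v := by
  unfold subtreeCount
  have : ∀ S : {S : Set (Fin n) // ((graphOf p).induce S).Connected},
      ∃ v, S.1.toFinset ∈ closedSets p v := fun S => by
    obtain ⟨v, -, hv⟩ := h.connected_set S.2
    exact ⟨v, hv⟩
  choose f hf using this
  have hinj : Function.Injective (fun S => (⟨f S, ⟨_, hf S⟩⟩ : Σ v, closedSets p v)) := by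
    intro S S' hSS
    simp only [Sigma.mk.injEq] at hSS
    obtain ⟨h1, h2⟩ := hSS
    apply Subtype.ext
    apply Set.toFinset_inj.1
    have : ∀ (u w : Fin n) (A B : Finset (Fin n)) (hA : A ∈ closedSets p u)
        (hB : B ∈ closedSets p w), u = w → HEq (⟨A, hA⟩ : closedSets p u)
        (⟨B, hB⟩ : closedSets p w) → A = B := by
      rintro u w A B hA hB rfl hh
      exact congrArg Subtype.val (eq_of_heq hh)
    exact this _ _ _ _ _ _ h1 h2
  have := Nat.card_le_card_of_injective _ hinj
  refine this.trans (le_of_eq ?_)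
  rw [Nat.card_eq_fintype_card, Fintype.card_sigma]
  simp [gnum]

end Graphs

/-! ### Relabelling -/

section Transport

lemma conj_iterate {U V : Type} (e : U ≃ V) (p : U → U) (i : ℕ) (x : U) :
    (e.conj p)^[i] (e x) = e (p^[i] x) := by
  have h : Function.Semiconj e p (e.conj p) := fun y => by simp [Equiv.conj_apply]
  exact ((h.iterate_right i) x).symm

lemma IsTF.conj {U V : Type} (e : U ≃ V) {r : U} {p : U → U} (h : IsTF r p) :
    IsTF (e r) (e.conj p) := by
  refine ⟨by simp [Equiv.conj_apply, h.1], fun y => ?_⟩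
  obtain ⟨i, hi⟩ := h.2 (e.symm y)
  refine ⟨i, ?_⟩
  have := conj_iterate e p i (e.symm y)
  rwa [e.apply_symm_apply, hi] at this

variable {U V : Type} [Fintype U] [Fintype V]

lemma desc_conj (e : U ≃ V) (p : U → U) (v : U) :
    desc (e.conj p) (e v) = (desc p v).map e.toEmbedding := by
  ext y
  obtain ⟨x, rfl⟩ := e.surjective y
  simp only [mem_desc, conj_iterate, Finset.mem_map_equiv, e.symm_apply_apply,
    EmbeddingLike.apply_eq_iff_eq]

lemma gnum_conj (e : U ≃ V) (p : U → U) (v : U) : gnum (e.conj p) (e v) = gnum p v :=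
  gnum_transfer e.toEmbedding p (e.conj p) v (desc_conj e p v)
    fun x _ _ => by simp [Equiv.conj_apply]

lemma sum_TF_conj (e : U ≃ V) (r : U) (f : (V → V) → ℝ) :
    ∑ p ∈ TF (e r), f p = ∑ p ∈ TF r, f (e.conj p) := by
  symm
  refine Finset.sum_bij (fun p _ => e.conj p) ?_ ?_ ?_ ?_
  · intro p hp; exact mem_TF.2 ((mem_TF.1 hp).conj e)
  · intro p _ q _ h; exact e.conj.injective h
  · intro p hp
    refine ⟨e.symm.conj p, ?_, ?_⟩
    · have := (mem_TF.1 hp).conj e.symm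
      rw [e.symm_apply_apply] at this
      exact mem_TF.2 this
    · funext x; simp [Equiv.conj_apply]
  · intro p _; rfl

lemma exists_equiv_map_root (h : Fintype.card U = Fintype.card V) (r : U) (r' : V) :
    ∃ e : U ≃ V, e r = r' := by
  let e := Fintype.equivOfCardEq h
  exact ⟨e.trans (Equiv.swap (e r) r'), by simp⟩

lemma card_TF_congr (h : Fintype.card U = Fintype.card V) (r : U) (r' : V) :
    (TF r).card = (TF r').card := by
  obtain ⟨e, rfl⟩ := exists_equiv_map_root h r r'
  have := sum_TF_conj e r (fun _ => 1)
  simp only [Finset.sum_const, nsmul_eq_mul, mul_one] at this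
  exact_mod_cast this.symm

end Transport

/-! ### Cayley's formula -/

section Cayley

/-- Parent maps on `A ⊕ B` in which every vertex of `A` is a leaf: a parent map on `B` and a free
choice of parent for each vertex of `A`. -/
lemma card_TF_leaves {A B : Type} [Fintype A] [Fintype B] (r : B) :
    ((TF (Sum.inr r : A ⊕ B)).filter fun p => ∀ x a, p x ≠ Sum.inl a).card =
      Fintype.card B ^ Fintype.card A * (TF r).card := by
  have h1 : Fintype.card B ^ Fintype.card A * (TF r).card =
      ((Finset.univ : Finset (A → B)) ×ˢ TF r).card := by
    rw [Finset.card_product, Finset.card_univ, Fintype.card_fun]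
  rw [h1]
  symm
  refine Finset.card_bij (fun z _ => Sum.elim (Sum.inr ∘ z.1) (Sum.inr ∘ z.2)) ?_ ?_ ?_
  · rintro ⟨b, p⟩ hz
    rw [Finset.mem_product] at hz
    have hp : IsTF r p := mem_TF.1 hz.2
    have hit : ∀ (i : ℕ) (y : B), (Sum.elim (Sum.inr ∘ b) (Sum.inr ∘ p) : A ⊕ B → A ⊕ B)^[i]
        (Sum.inr y) = Sum.inr (p^[i] y) := by
      intro i
      induction i with
      | zero => intro y; rfl
      | succ i ih =>
        intro y; rw [Function.iterate_succ_apply, Function.iterate_succ_apply]; exact ih _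
    refine Finset.mem_filter.2 ⟨mem_TF.2 ⟨by simp [hp.1], ?_⟩, ?_⟩
    · rintro (a | y)
      · obtain ⟨i, hi⟩ := hp.2 (b a)
        exact ⟨i + 1, by
          rw [Function.iterate_succ_apply]; simp only [Sum.elim_inl, Function.comp]; rw [hit, hi]⟩
      · obtain ⟨i, hi⟩ := hp.2 y
        exact ⟨i, by rw [hit, hi]⟩
    · rintro (x | x) a <;> simp
  · rintro ⟨b, p⟩ _ ⟨b', p'⟩ _ h
    simp only at h
    refine Prod.ext ?_ ?_
    · funext a; simpa using congrFun h (Sum.inl a)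
    · funext a; simpa using congrFun h (Sum.inr a)
  · intro p hp
    obtain ⟨hp, hl⟩ := Finset.mem_filter.1 hp
    have hp := mem_TF.1 hp
    have hr : ∀ x, ∃ y, p x = Sum.inr y := by
      intro x
      rcases hx : p x with a | y
      · exact absurd hx (hl x a)
      · exact ⟨y, rfl⟩
    choose g hg using hr
    have hit : ∀ (i : ℕ) (y : B), p^[i] (Sum.inr y) = Sum.inr ((g ∘ Sum.inr)^[i] y) := by
      intro i
      induction i with
      | zero => intro y; rfl
      | succ i ih =>
        intro y; rw [Function.iterate_succ_apply, Function.iterate_succ_apply, hg]; exact ih _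
    refine ⟨(g ∘ Sum.inl, g ∘ Sum.inr), ?_, ?_⟩
    · refine Finset.mem_product.2 ⟨Finset.mem_univ _, mem_TF.2 ⟨?_, fun y => ?_⟩⟩
      · have := hp.1
        rw [hg] at this
        exact Sum.inr_injective this
      · obtain ⟨i, hi⟩ := hp.2 (Sum.inr y)
        rw [hit] at hi
        exact ⟨i, Sum.inr_injective hi⟩
    · funext x
      rcases x with x | x <;> simp [hg]

variable {V : Type} [Fintype V]

/-- Trees in which all vertices of `J` are leaves: a tree on the complement of `J`, and a free choice
of parent for each vertex of `J`. -/
lemma card_TF_leaves_subset (r : V) (J : Finset V) (hr : r ∉ J) :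
    ((TF r).filter fun p => ∀ x, p x ∉ J).card =
      (Fintype.card V - J.card) ^ J.card * (TF (⟨r, hr⟩ : {x // x ∉ J})).card := by
  let e : {x // x ∈ J} ⊕ {x // x ∉ J} ≃ V := Equiv.sumCompl (· ∈ J)
  have h1 := card_TF_leaves (A := {x // x ∈ J}) (⟨r, hr⟩ : {x // x ∉ J})
  have hB : Fintype.card {x // x ∉ J} = Fintype.card V - J.card := by
    rw [Fintype.card_subtype_compl, Fintype.card_coe]
  rw [hB, Fintype.card_coe] at h1
  rw [← h1]
  have h2 := sum_TF_conj e (Sum.inr ⟨r, hr⟩) (fun p => if ∀ x, p x ∉ J then 1 else 0)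
  have her : e (Sum.inr ⟨r, hr⟩) = r := by simp [e]
  rw [her, Finset.sum_boole] at h2
  have h3 : ∀ p : ({x // x ∈ J} ⊕ {x // x ∉ J}) → ({x // x ∈ J} ⊕ {x // x ∉ J}),
      (∀ x, e.conj p x ∉ J) ↔ ∀ x a, p x ≠ Sum.inl a := by
    intro p
    constructor
    · intro h x a hx
      have := h (e x)
      rw [Equiv.conj_apply, e.symm_apply_apply, hx] at this
      simp [e] at this
    · intro h x hx
      rcases hp : p (e.symm x) with a | y
      · exact h _ a hp
      · simp only [Equiv.conj_apply] at hx
        rw [hp] at hx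
        simp only [e, Equiv.sumCompl_apply_inr] at hx
        exact y.2 hx
  simp only [h3, Finset.sum_boole] at h2
  exact_mod_cast h2

lemma IsTF.exists_leaf {r : V} {p : V → V} (h : IsTF r p) (hV : 2 ≤ Fintype.card V) :
    ((Finset.univ.erase r).filter fun y => ∀ x, p x ≠ y).Nonempty := by
  by_contra hne
  rw [Finset.not_nonempty_iff_eq_empty, Finset.filter_eq_empty_iff] at hne
  have hsurj : Function.Surjective p := by
    intro y
    by_cases hy : y = r
    · exact ⟨r, by rw [hy, h.1]⟩
    · have := hne (x := y) (by simp [hy])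
      push Not at this
      exact this
  have hinj := Finite.injective_iff_surjective.2 hsurj
  obtain ⟨x, hx⟩ := Fintype.exists_ne_of_one_lt_card hV r
  obtain ⟨i, hi⟩ := h.2 x
  exact hx (hinj.iterate i (hi.trans (h.iterate_root i).symm))

/-- Inclusion-exclusion over the set of non-root leaves, which is never empty. -/
lemma alternating_leaves (r : V) (hV : 2 ≤ Fintype.card V) :
    ∑ J ∈ (Finset.univ.erase r).powerset,
      (-1 : ℤ) ^ J.card * ((TF r).filter fun p => ∀ x, p x ∉ J).card = 0 := by
  have h1 : ∀ J : Finset V, (((TF r).filter fun p => ∀ x, p x ∉ J).card : ℤ) =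
      ∑ p ∈ TF r, if ∀ x, p x ∉ J then 1 else 0 := by
    intro J; rw [Finset.sum_boole]
  simp only [h1, Finset.mul_sum]
  rw [Finset.sum_comm]
  refine Finset.sum_eq_zero fun p hp => ?_
  have h2 := Finset.sum_powerset_neg_one_pow_card_of_nonempty ((mem_TF.1 hp).exists_leaf hV)
  simp only [mul_ite, mul_one, mul_zero]
  rw [← Finset.sum_filter, ← h2]
  refine Finset.sum_congr ?_ fun _ _ => rfl
  ext J
  simp only [Finset.mem_filter, Finset.mem_powerset, Finset.subset_iff, Finset.mem_erase,
    Finset.mem_univ, and_true]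
  constructor
  · rintro ⟨h3, h4⟩ y hy
    exact ⟨h3 hy, fun x hx => h4 x (hx ▸ hy)⟩
  · intro h3
    exact ⟨fun y hy => (h3 hy).1, fun x hx => (h3 hx).2 x rfl⟩

/-- The `m`-th finite difference of a power of exponent `d < m` vanishes. -/
lemma alternating_pow (m d : ℕ) (hd : d < m) :
    ∑ j ∈ Finset.range (m + 1), (m.choose j : ℤ) * ((-1) ^ j * ((m + 1 - j : ℕ) : ℤ) ^ d) = 0 := by
  have h := fwdDiff_iter_eq_sum_shift (1 : ℤ) (fun x : ℤ => x ^ d) m 1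
  have h0 := congrFun (fwdDiff_iter_pow_eq_zero_of_lt (R := ℤ) hd) 1
  rw [h0, Pi.zero_apply] at h
  rw [h, ← Finset.sum_range_reflect]
  refine Finset.sum_congr rfl fun j hj => ?_
  have hj : j ≤ m := by simpa [Nat.lt_succ_iff] using hj
  have e1 : m + 1 - 1 - j = m - j := by omega
  have e2 : m + 1 - (m - j) = 1 + j := by omega
  simp only [e1, e2, Nat.choose_symm hj, smul_eq_mul]
  push_cast
  ring

/-- **Cayley's formula** for parent maps with a prescribed root. -/
theorem card_TF (r : V) : (TF r).card = Fintype.card V ^ (Fintype.card V - 2) := by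
  induction hn : Fintype.card V using Nat.strong_induction_on generalizing V with
  | _ n ih =>
  have hpos : 0 < n := hn ▸ Fintype.card_pos_iff.2 ⟨r⟩
  rcases Nat.lt_or_ge n 2 with h2 | h2
  · have h1 : n = 1 := by omega
    subst h1
    have hsub : Subsingleton V := (Fintype.card_le_one_iff_subsingleton).1 hn.le
    have : TF r = {id} := by
      ext p
      rw [mem_TF, Finset.mem_singleton]
      constructor
      · intro _; funext x; exact Subsingleton.elim _ _
      · rintro rfl; exact ⟨rfl, fun x => ⟨0, Subsingleton.elim _ _⟩⟩
    rw [this]; simp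
  have halt := alternating_leaves r (hn ▸ h2)
  have hcard : (Finset.univ.erase r).card = n - 1 := by
    rw [Finset.card_erase_of_mem (Finset.mem_univ _), Finset.card_univ, hn]
  -- the induction hypothesis evaluates every term but the one of the empty set
  have hterm : ∀ J ∈ (Finset.univ.erase r).powerset,
      (-1 : ℤ) ^ J.card * ((TF r).filter fun p => ∀ x, p x ∉ J).card =
      (-1) ^ J.card * ((n - J.card : ℕ) : ℤ) ^ (n - 2) +
        if J = ∅ then ((TF r).card : ℤ) - (n : ℤ) ^ (n - 2) else 0 := by
    intro J hJ
    have hJr : r ∉ J := fun h => by simpa using (Finset.mem_powerset.1 hJ) h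
    by_cases hJ0 : J = ∅
    · subst hJ0; simp
    have hJpos : 0 < J.card := Finset.card_pos.2 (Finset.nonempty_iff_ne_empty.2 hJ0)
    have hJle : J.card ≤ n - 1 := hcard ▸ Finset.card_le_card (Finset.mem_powerset.1 hJ)
    have hB : Fintype.card {x // x ∉ J} = n - J.card := by
      rw [Fintype.card_subtype_compl, Fintype.card_coe, hn]
    rw [card_TF_leaves_subset r J hJr, ih (n - J.card) (by omega) (⟨r, hJr⟩ : {x // x ∉ J}) hB,
      if_neg hJ0, add_zero, hn]
    push_cast
    rw [← pow_add]
    rcases Nat.lt_or_ge (n - J.card) 2 with h | h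
    · have : n - J.card = 1 := by omega
      simp [this]
    · congr 2; omega
  rw [Finset.sum_congr rfl hterm, Finset.sum_add_distrib, Finset.sum_ite_eq',
    if_pos (Finset.empty_mem_powerset _),
    Finset.sum_powerset_apply_card (fun j => (-1 : ℤ) ^ j * ((n - j : ℕ) : ℤ) ^ (n - 2)),
    hcard] at halt
  have hz := alternating_pow (n - 1) (n - 2) (by omega)
  have hn1 : n - 1 + 1 = n := by omega
  simp only [hn1] at hz
  simp only [hn1, nsmul_eq_mul] at halt
  rw [hz, zero_add, sub_eq_zero] at halt
  exact_mod_cast halt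

end Cayley

/-! ### Attaching one rooted tree to another -/

section Glue
variable {A B : Type}

/-- The tree obtained from a tree `q` on `A` rooted at `v` and a tree `p` on `B` by making `v` a child
of `b`. -/
noncomputable def glue (q : A → A) (v : A) (p : B → B) (b : B) : A ⊕ B → A ⊕ B
  | Sum.inl a => if a = v then Sum.inr b else Sum.inl (q a)
  | Sum.inr y => Sum.inr (p y)

lemma glue_iterate_inr (q : A → A) (v : A) (p : B → B) (b : B) (i : ℕ) (y : B) :
    (glue q v p b)^[i] (Sum.inr y) = Sum.inr (p^[i] y) := by
  induction i generalizing y with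
  | zero => rfl
  | succ i ih => rw [Function.iterate_succ_apply, Function.iterate_succ_apply]; exact ih _

lemma glue_inl_ne {q : A → A} {v : A} {p : B → B} {b : B} {a : A} (h : a ≠ v) :
    glue q v p b (Sum.inl a) = Sum.inl (q a) := by simp [glue, h]

lemma glue_inl_self {q : A → A} {v : A} {p : B → B} {b : B} :
    glue q v p b (Sum.inl v) = Sum.inr b := by simp [glue]

lemma exists_glue_iterate_inl {q : A → A} {v : A} (hq : IsTF v q) (p : B → B) (b : B) (a : A) :
    ∃ i, (glue q v p b)^[i] (Sum.inl a) = Sum.inl v := by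
  obtain ⟨j, hj⟩ := hq.2 a
  induction j generalizing a with
  | zero => exact ⟨0, congrArg Sum.inl hj⟩
  | succ j ih =>
    by_cases ha : a = v
    · exact ⟨0, congrArg Sum.inl ha⟩
    obtain ⟨i, hi⟩ := ih (q a) (by simpa using hj)
    exact ⟨i + 1, by rw [Function.iterate_succ_apply, glue_inl_ne ha, hi]⟩

lemma IsTF.glue {q : A → A} {v : A} {p : B → B} {r : B} (hq : IsTF v q) (hp : IsTF r p) (b : B) :
    IsTF (Sum.inr r) (glue q v p b) := by
  refine ⟨congrArg Sum.inr hp.1, ?_⟩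
  rintro (a | y)
  · obtain ⟨i, hi⟩ := exists_glue_iterate_inl hq p b a
    obtain ⟨j, hj⟩ := hp.2 b
    refine ⟨j + 1 + i, ?_⟩
    rw [Function.iterate_add_apply, hi, Function.iterate_succ_apply, glue_inl_self,
      glue_iterate_inr, hj]
  · obtain ⟨j, hj⟩ := hp.2 y
    exact ⟨j, by rw [glue_iterate_inr, hj]⟩

lemma glue_injective {q q' : A → A} {v : A} {p p' : B → B} {b b' : B} (hq : q v = v)
    (hq' : q' v = v) (h : glue q v p b = glue q' v p' b') : q = q' ∧ p = p' ∧ b = b' := by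
  refine ⟨?_, ?_, ?_⟩
  · funext a
    by_cases ha : a = v
    · rw [ha, hq, hq']
    · simpa [glue_inl_ne ha] using congrFun h (Sum.inl a)
  · funext y; simpa [glue] using congrFun h (Sum.inr y)
  · simpa [glue_inl_self] using congrFun h (Sum.inl v)

variable [Fintype A] [Fintype B]

lemma inr_mem_desc_glue {q : A → A} {v : A} {p : B → B} {b y w : B} :
    Sum.inr y ∈ desc (glue q v p b) (Sum.inr w) ↔ y ∈ desc p w := by
  simp [mem_desc, glue_iterate_inr]

lemma inr_not_mem_desc_glue {q : A → A} {v : A} {p : B → B} {b y : B} {a : A} :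
    Sum.inr y ∉ desc (glue q v p b) (Sum.inl a) := by
  simp [mem_desc, glue_iterate_inr]

lemma desc_glue_inl {q : A → A} {v : A} (hq : IsTF v q) (p : B → B) (b : B) :
    desc (glue q v p b) (Sum.inl v) = Finset.univ.map Function.Embedding.inl := by
  ext (a | y)
  · simpa [mem_desc] using exists_glue_iterate_inl hq p b a
  · simpa using inr_not_mem_desc_glue

lemma desc_glue_inr {q : A → A} {v : A} (hq : IsTF v q) {p : B → B} {b w : B}
    (hb : b ∉ desc p w) :
    desc (glue q v p b) (Sum.inr w) = (desc p w).map Function.Embedding.inr := by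
  ext (a | y)
  · simp only [Finset.mem_map, Function.Embedding.inr_apply, reduceCtorEq, and_false, exists_false,
      iff_false]
    intro ha
    have hav : Sum.inl a ∈ desc (glue q v p b) (Sum.inl v) := by simp [desc_glue_inl hq]
    rcases desc_total ha hav with h | h
    · exact inr_not_mem_desc_glue h
    · have := step_mem_desc h (by simp)
      rw [glue_inl_self, inr_mem_desc_glue] at this
      exact hb this
  · rw [inr_mem_desc_glue]; simp

lemma card_desc_le_glue (q : A → A) (v : A) (p : B → B) (b w : B) :
    (desc p w).card ≤ (desc (glue q v p b) (Sum.inr w)).card := by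
  rw [← Finset.card_map Function.Embedding.inr]
  refine Finset.card_le_card fun x hx => ?_
  obtain ⟨y, hy, rfl⟩ := Finset.mem_map.1 hx
  exact inr_mem_desc_glue.2 hy

lemma gnum_glue_inl {q : A → A} {v : A} (hq : IsTF v q) (p : B → B) (b : B) :
    gnum (glue q v p b) (Sum.inl v) = gnum q v :=
  gnum_transfer Function.Embedding.inl q _ v
    (by rw [hq.desc_root]; exact desc_glue_inl hq p b) fun _ _ hx => glue_inl_ne hx

lemma gnum_glue_inr {q : A → A} {v : A} (hq : IsTF v q) {p : B → B} {b w : B}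
    (hb : b ∉ desc p w) : gnum (glue q v p b) (Sum.inr w) = gnum p w :=
  gnum_transfer Function.Embedding.inr p _ w (desc_glue_inr hq hb) fun _ _ _ => rfl

/-- A tree in which the descendants of `v` are exactly the vertices of `A` arises by gluing. -/
lemma exists_glue {r : B} {v : A} {p : A ⊕ B → A ⊕ B} (hp : IsTF (Sum.inr r) p)
    (hD : desc p (Sum.inl v) = Finset.univ.map Function.Embedding.inl) :
    ∃ q p' b, IsTF v q ∧ IsTF r p' ∧ glue q v p' b = p := by
  have hinl : ∀ a, Sum.inl a ∈ desc p (Sum.inl v) := fun a => by rw [hD]; simp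
  have hinr : ∀ y, Sum.inr y ∉ desc p (Sum.inl v) := fun a => by rw [hD]; simp
  have hq : ∀ a, ∃ a', (a = v → a' = v) ∧ (a ≠ v → p (Sum.inl a) = Sum.inl a') := by
    intro a
    by_cases ha : a = v
    · exact ⟨v, fun _ => rfl, fun h => absurd ha h⟩
    have h1 := step_mem_desc (hinl a) (fun h => ha (Sum.inl_injective h))
    rcases hpa : p (Sum.inl a) with a' | y
    · exact ⟨a', fun h => absurd h ha, fun _ => rfl⟩
    · rw [hpa] at h1; exact absurd h1 (hinr y)
  have hp' : ∀ y, ∃ y', p (Sum.inr y) = Sum.inr y' := by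
    intro y
    rcases hpa : p (Sum.inr y) with a' | y'
    · exact absurd (desc_of_step (hpa ▸ hinl a')) (hinr y)
    · exact ⟨y', rfl⟩
  have hb : ∃ b, p (Sum.inl v) = Sum.inr b := by
    rcases hpa : p (Sum.inl v) with a' | y'
    · exfalso
      have h1 : Sum.inl v ∈ desc p (Sum.inl a') := mem_desc.2 ⟨1, hpa⟩
      have h2 := hp.desc_antisymm h1 (hinl a')
      rw [← h2] at hpa
      obtain ⟨j, hj⟩ := hp.2 (Sum.inl v)
      rw [Function.iterate_fixed hpa j] at hj
      exact absurd hj (by simp)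
    · exact ⟨y', rfl⟩
  choose q hq1 hq2 using hq
  choose p' hp' using hp'
  obtain ⟨b, hb⟩ := hb
  have hglue : glue q v p' b = p := by
    funext x
    rcases x with a | y
    · by_cases ha : a = v
      · rw [ha, glue_inl_self, hb]
      · rw [glue_inl_ne ha, hq2 a ha]
    · exact (hp' y).symm
  refine ⟨q, p', b, ⟨hq1 v rfl, fun a => ?_⟩, ⟨?_, fun y => ?_⟩, hglue⟩
  · obtain ⟨i, hi⟩ := mem_desc.1 (hinl a)
    induction i generalizing a with
    | zero => exact ⟨0, Sum.inl_injective hi⟩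
    | succ i ih =>
      by_cases ha : a = v
      · exact ⟨0, ha⟩
      rw [Function.iterate_succ_apply, hq2 a ha] at hi
      obtain ⟨j, hj⟩ := ih _ hi
      exact ⟨j + 1, by simpa using hj⟩
  · have := hp.1
    rw [hp'] at this
    exact Sum.inr_injective this
  · obtain ⟨i, hi⟩ := hp.2 (Sum.inr y)
    rw [← hglue, glue_iterate_inr] at hi
    exact ⟨i, Sum.inr_injective hi⟩

/-- Summing over trees whose fringe subtree at `v` has vertex set `A` amounts to choosing the fringe
subtree, the remaining tree and the vertex of attachment independently. -/
lemma sum_glue (r : B) (v : A) (f : (A ⊕ B → A ⊕ B) → ℝ) :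
    (∑ p ∈ TF (Sum.inr r : A ⊕ B),
      if desc p (Sum.inl v) = Finset.univ.map Function.Embedding.inl then f p else 0) =
    ∑ q ∈ TF v, ∑ p ∈ TF r, ∑ b, f (glue q v p b) := by
  rw [← Finset.sum_filter]
  simp only [← Finset.sum_product']
  symm
  refine Finset.sum_bij (fun z _ => glue z.1 v z.2.1 z.2.2) ?_ ?_ ?_ ?_
  · rintro ⟨q, p, b⟩ hz
    simp only [Finset.mem_product, mem_TF, Finset.mem_univ, and_true] at hz
    exact Finset.mem_filter.2 ⟨mem_TF.2 (hz.1.glue hz.2 b), desc_glue_inl hz.1 p b⟩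
  · rintro ⟨q, p, b⟩ hz ⟨q', p', b'⟩ hz' h
    simp only [Finset.mem_product, mem_TF, Finset.mem_univ, and_true] at hz hz'
    obtain ⟨h1, h2, h3⟩ := glue_injective hz.1.1 hz'.1.1 h
    exact Prod.ext h1 (Prod.ext h2 h3)
  · intro p hp
    obtain ⟨h1, h2⟩ := Finset.mem_filter.1 hp
    obtain ⟨q, p', b, hq, hp', h⟩ := exists_glue (mem_TF.1 h1) h2
    exact ⟨(q, p', b), by simp [mem_TF, hq, hp'], h⟩
  · intro _ _; rfl

end Glue

/-! ### Sums over fringe subtrees -/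

section Split
variable {V : Type}

/-- The identification of `V` with the disjoint union of `S` and its complement. -/
noncomputable def splitEquiv (S : Finset V) : {x // x ∈ S} ⊕ {x // x ∉ S} ≃ V :=
  Equiv.sumCompl (· ∈ S)

@[simp] lemma splitEquiv_inl (S : Finset V) (x : {x // x ∈ S}) :
    splitEquiv S (Sum.inl x) = x := by simp [splitEquiv]

@[simp] lemma splitEquiv_inr (S : Finset V) (x : {x // x ∉ S}) :
    splitEquiv S (Sum.inr x) = x := by simp [splitEquiv]

variable [Fintype V]

/-- `sum_glue` for a vertex set `S` of the fringe subtree inside `V`. -/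
lemma sum_fringe_eq (r : V) (S : Finset V) (hr : r ∉ S) (f : (V → V) → V → ℝ) :
    (∑ p ∈ TF r, ∑ v ∈ S, if desc p v = S then f p v else 0) =
    ∑ v : {x // x ∈ S}, ∑ q ∈ TF v, ∑ p ∈ TF (⟨r, hr⟩ : {x // x ∉ S}), ∑ b,
      f ((splitEquiv S).conj (glue q v p b)) v := by
  rw [Finset.sum_comm, ← Finset.sum_coe_sort S]
  refine Finset.sum_congr rfl fun v _ => ?_
  have h1 := sum_TF_conj (splitEquiv S) (Sum.inr ⟨r, hr⟩)
    (fun p => if desc p v = S then f p v else 0)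
  rw [splitEquiv_inr] at h1
  rw [h1, ← sum_glue ⟨r, hr⟩ v fun p => f ((splitEquiv S).conj p) v]
  refine Finset.sum_congr rfl fun p _ => ?_
  have h2 := desc_conj (splitEquiv S) p (Sum.inl v)
  rw [splitEquiv_inl] at h2
  rw [h2]
  have h3 : S = (Finset.univ.map Function.Embedding.inl).map (splitEquiv S).toEmbedding := by
    ext x
    rw [Finset.mem_map_equiv]
    obtain ⟨y, rfl⟩ := (splitEquiv S).surjective x
    rw [Equiv.symm_apply_apply]
    rcases y with a | y
    · simp
    · simpa using y.2
  have h4 : ((desc p (Sum.inl v)).map (splitEquiv S).toEmbedding = S) ↔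
      desc p (Sum.inl v) = Finset.univ.map Function.Embedding.inl := by
    conv_lhs => rhs; rw [h3]
    exact (Finset.map_injective _).eq_iff
  by_cases h : desc p (Sum.inl v) = Finset.univ.map Function.Embedding.inl
  · exact (if_pos (h4.2 h)).trans (if_pos h).symm
  · exact (if_neg (mt h4.1 h)).trans (if_neg h).symm

/-- A sum over the vertices other than the root, arranged by the vertex set of the fringe subtree. -/
lemma sum_fringe_split (r : V) (f : (V → V) → V → ℝ) :
    (∑ p ∈ TF r, ∑ v, if r ∈ desc p v then 0 else f p v) =
    ∑ S ∈ (Finset.univ.erase r).powerset,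
      ∑ p ∈ TF r, ∑ v ∈ S, if desc p v = S then f p v else 0 := by
  rw [Finset.sum_comm (s := (Finset.univ.erase r).powerset)]
  refine Finset.sum_congr rfl fun p _ => ?_
  have h1 : ∀ S : Finset V, (∑ v ∈ S, if desc p v = S then f p v else 0) =
      ∑ v, if desc p v = S then f p v else 0 := by
    intro S
    refine Finset.sum_subset (Finset.subset_univ S) fun v _ hv => ?_
    rw [if_neg]
    intro h
    exact hv (h ▸ self_mem_desc p v)
  simp only [h1]
  rw [Finset.sum_comm]
  refine Finset.sum_congr rfl fun v _ => ?_
  rw [Finset.sum_ite_eq]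
  simp only [Finset.mem_powerset, Finset.subset_erase, Finset.subset_univ, true_and]
  by_cases h : r ∈ desc p v <;> simp [h]

end Split

/-! ### Moments of additive functionals -/

section Moments

/-- The sum of `φ (g(T,v))` over all rooted labelled trees `(T,v)` on `k` vertices. -/
noncomputable def Gsum (φ : ℕ → ℝ) (k : ℕ) : ℝ := ∑ v : Fin k, ∑ q ∈ TF v, φ (gnum q v)

lemma Gsum_zero (φ : ℕ → ℝ) : Gsum φ 0 = 0 := by simp [Gsum]

lemma sum_gnum_eq_Gsum {A : Type} [Fintype A] (φ : ℕ → ℝ) :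
    ∑ v : A, ∑ q ∈ TF v, φ (gnum q v) = Gsum φ (Fintype.card A) := by
  have e := (Fintype.equivFin A).symm
  rw [← Equiv.sum_comp e, Gsum]
  refine Finset.sum_congr rfl fun v _ => ?_
  rw [sum_TF_conj e v]
  simp only [gnum_conj]

variable {V : Type} [Fintype V]

lemma card_compl_subtype (S : Finset V) :
    Fintype.card {x // x ∉ S} = Fintype.card V - S.card := by
  rw [Fintype.card_subtype_compl, Fintype.card_coe]

lemma card_desc_split {S : Finset V} {v : {x // x ∈ S}} {q : {x // x ∈ S} → {x // x ∈ S}}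
    (hq : IsTF v q) (p : {x // x ∉ S} → {x // x ∉ S}) (b : {x // x ∉ S}) :
    (desc ((splitEquiv S).conj (glue q v p b)) v).card = S.card := by
  have h := desc_conj (splitEquiv S) (glue q v p b) (Sum.inl v)
  rw [splitEquiv_inl] at h
  rw [h, Finset.card_map, desc_glue_inl hq, Finset.card_map, Finset.card_univ, Fintype.card_coe]

lemma gnum_split {S : Finset V} {v : {x // x ∈ S}} {q : {x // x ∈ S} → {x // x ∈ S}}
    (hq : IsTF v q) (p : {x // x ∉ S} → {x // x ∉ S}) (b : {x // x ∉ S}) :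
    gnum ((splitEquiv S).conj (glue q v p b)) v = gnum q v := by
  have h := gnum_conj (splitEquiv S) (glue q v p b) (Sum.inl v)
  rw [splitEquiv_inl] at h
  rw [h, gnum_glue_inl hq]

lemma sum_powerset_erase (r : V) (H : ℕ → ℝ) :
    ∑ S ∈ (Finset.univ.erase r).powerset, H S.card =
      ∑ j ∈ Finset.range (Fintype.card V), ((Fintype.card V - 1).choose j : ℝ) * H j := by
  have hpos : 0 < Fintype.card V := Fintype.card_pos_iff.2 ⟨r⟩
  rw [Finset.sum_powerset_apply_card, Finset.card_erase_of_mem (Finset.mem_univ _),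
    Finset.card_univ, Nat.sub_add_cancel hpos]
  simp only [nsmul_eq_mul]

/-- If the contribution of a fringe vertex set depends only on its size, the total over all trees is a
binomial sum over the sizes. -/
lemma fringe_total_eq (r : V) (f : (V → V) → V → ℝ) (H : ℕ → ℝ)
    (hH : ∀ (S : Finset V) (hr : r ∉ S),
      ∑ v : {x // x ∈ S}, ∑ q ∈ TF v, ∑ p ∈ TF (⟨r, hr⟩ : {x // x ∉ S}), ∑ b,
        f ((splitEquiv S).conj (glue q v p b)) v = H S.card) :
    (∑ p ∈ TF r, ∑ v, if r ∈ desc p v then 0 else f p v) =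
      ∑ j ∈ Finset.range (Fintype.card V), ((Fintype.card V - 1).choose j : ℝ) * H j := by
  rw [sum_fringe_split, ← sum_powerset_erase r H]
  refine Finset.sum_congr rfl fun S hS => ?_
  have hr : r ∉ S := fun h => by simpa using (Finset.mem_powerset.1 hS) h
  rw [sum_fringe_eq r S hr, hH S hr]

/-- The version of `fringe_total_eq` for upper bounds. -/
lemma fringe_total_le (r : V) (f : (V → V) → V → ℝ) (H : ℕ → ℝ)
    (hH : ∀ (S : Finset V) (hr : r ∉ S),
      ∑ v : {x // x ∈ S}, ∑ q ∈ TF v, ∑ p ∈ TF (⟨r, hr⟩ : {x // x ∉ S}), ∑ b,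
        f ((splitEquiv S).conj (glue q v p b)) v ≤ H S.card) :
    (∑ p ∈ TF r, ∑ v, if r ∈ desc p v then 0 else f p v) ≤
      ∑ j ∈ Finset.range (Fintype.card V), ((Fintype.card V - 1).choose j : ℝ) * H j := by
  rw [sum_fringe_split, ← sum_powerset_erase r H]
  refine Finset.sum_le_sum fun S hS => ?_
  have hr : r ∉ S := fun h => by simpa using (Finset.mem_powerset.1 hS) h
  rw [sum_fringe_eq r S hr]
  exact hH S hr

lemma IsTF.root_mem_desc_iff {r : V} {p : V → V} (h : IsTF r p) (v : V) :
    r ∈ desc p v ↔ v = r := by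
  constructor
  · intro hr
    exact h.desc_antisymm (by rw [h.desc_root]; exact Finset.mem_univ _) hr
  · rintro rfl; exact self_mem_desc p v

/-- Since `g(v) - 1` is the product of `g` over the children of `v`, its logarithm is a sum over the
fringe subtrees attached directly to the root. -/
lemma sum_log_gnum_pred (v : V) :
    ∑ p ∈ TF v, Real.log ((gnum p v : ℝ) - 1) =
      ∑ j ∈ Finset.range (Fintype.card V), ((Fintype.card V - 1).choose j : ℝ) *
        (((Fintype.card V - j : ℕ) : ℝ) ^ (Fintype.card V - j - 2) *
          Gsum (fun g => Real.log g) j) := by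
  set l := Fintype.card V with hl
  have h1 : ∑ p ∈ TF v, Real.log ((gnum p v : ℝ) - 1) =
      ∑ p ∈ TF v, ∑ w, if v ∈ desc p w then 0 else
        if p w = v then Real.log (gnum p w) else 0 := by
    refine Finset.sum_congr rfl fun p hp => ?_
    have hp := mem_TF.1 hp
    rw [hp.gnum_rec v]
    push_cast
    rw [add_sub_cancel_left, Real.log_prod (fun w _ => by
      have := two_le_gnum p w
      exact_mod_cast (show gnum p w ≠ 0 by omega))]
    rw [children, Finset.sum_filter]
    refine Finset.sum_congr rfl fun w _ => ?_
    by_cases hw : w = v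
    · simp [hw, self_mem_desc]
    · simp [hw, hp.root_mem_desc_iff]
  rw [h1]
  have h2 := fringe_total_eq v (fun p w => if p w = v then Real.log (gnum p w) else 0)
    (fun j => ((l - j : ℕ) : ℝ) ^ (l - j - 2) * Gsum (fun g => Real.log g) j) ?_
  · exact h2
  · intro S hr
    have h3 : ∀ w : {x // x ∈ S}, ∀ q ∈ TF w,
        (∑ p ∈ TF (⟨v, hr⟩ : {x // x ∉ S}), ∑ b : {x // x ∉ S},
          if (splitEquiv S).conj (glue q w p b) w = v then
            Real.log (gnum ((splitEquiv S).conj (glue q w p b)) w) else 0) =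
        ((l - S.card : ℕ) : ℝ) ^ (l - S.card - 2) * Real.log (gnum q w) := by
      intro w q hq
      have hq := mem_TF.1 hq
      have h4 : ∀ p b, (splitEquiv S).conj (glue q w p b) w = v ↔ b = ⟨v, hr⟩ := by
        intro p b
        have : (splitEquiv S).symm (w : V) = Sum.inl w := by
          rw [Equiv.symm_apply_eq, splitEquiv_inl]
        rw [Equiv.conj_apply, this, glue_inl_self, splitEquiv_inr, Subtype.ext_iff]
      simp only [h4, gnum_split hq, Finset.sum_ite_eq', Finset.mem_univ, if_true,
        Finset.sum_const, nsmul_eq_mul, card_TF, card_compl_subtype, ← hl]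
      push_cast
      rfl
    rw [Finset.sum_congr rfl fun w _ => Finset.sum_congr rfl (h3 w)]
    simp only [← Finset.mul_sum]
    rw [sum_gnum_eq_Gsum (fun g => Real.log g), Fintype.card_coe]

/-- The recursion behind the correction terms in `fK`. -/
lemma Gsum_log_pred (l : ℕ) (hl : 1 ≤ l) :
    Gsum (fun g => Real.log ((g : ℝ) - 1)) l =
      ∑ k ∈ Finset.range l, ((l - k : ℕ) : ℝ) ^ (l - k - 1) * (Nat.choose l (l - k)) *
        Gsum (fun g => Real.log g) k := by
  have hv : ∀ v : Fin l, ∑ p ∈ TF v, Real.log ((gnum p v : ℝ) - 1) =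
      ∑ j ∈ Finset.range l, ((l - 1).choose j : ℝ) *
        (((l - j : ℕ) : ℝ) ^ (l - j - 2) * Gsum (fun g => Real.log g) j) := by
    intro v
    have := sum_log_gnum_pred v
    simpa only [Fintype.card_fin] using this
  rw [Gsum, Finset.sum_congr rfl fun v _ => hv v, Finset.sum_const, Finset.card_univ,
    Fintype.card_fin, nsmul_eq_mul, Finset.mul_sum]
  refine Finset.sum_congr rfl fun k hk => ?_
  have hk : k < l := Finset.mem_range.1 hk
  have h5 : ((l - 1).choose k : ℝ) * l = l.choose k * ((l - k : ℕ) : ℝ) := by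
    have := Nat.choose_mul_succ_eq (l - 1) k
    rw [Nat.sub_add_cancel hl] at this
    exact_mod_cast this
  have h6 : ((l - k : ℕ) : ℝ) ^ (l - k - 1) =
      ((l - k : ℕ) : ℝ) * ((l - k : ℕ) : ℝ) ^ (l - k - 2) := by
    rcases Nat.lt_or_ge (l - k) 2 with h | h
    · have : l - k = 1 := by omega
      simp [this]
    · rw [← pow_succ']; congr 1; omega
  rw [h6, Nat.choose_symm hk.le]
  linear_combination (((l - k : ℕ) : ℝ) ^ (l - k - 2) * Gsum (fun g => Real.log g) k) * h5

/-- The contribution `φ (g)` of a vertex whose fringe subtree has at most `K` vertices; zero for the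
other vertices. -/
noncomputable def psi (K : ℕ) (φ : ℕ → ℝ) (p : V → V) (v : V) : ℝ :=
  if (desc p v).card ≤ K then φ (gnum p v) else 0

/-- The additive functional of the tree with toll function `psi`. -/
noncomputable def Zsum (K : ℕ) (φ : ℕ → ℝ) (p : V → V) : ℝ := ∑ v, psi K φ p v

lemma psi_conj {U : Type} [Fintype U] (e : U ≃ V) (K : ℕ) (φ : ℕ → ℝ) (p : U → U) (v : U) :
    psi K φ (e.conj p) (e v) = psi K φ p v := by
  rw [psi, psi, desc_conj, gnum_conj, Finset.card_map]

lemma Zsum_conj {U : Type} [Fintype U] (e : U ≃ V) (K : ℕ) (φ : ℕ → ℝ) (p : U → U) :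
    Zsum K φ (e.conj p) = Zsum K φ p := by
  rw [Zsum, Zsum, ← Equiv.sum_comp e]
  simp only [psi_conj]

/-- The root contributes nothing when the tree has more than `K` vertices. -/
lemma IsTF.psi_ite {r : V} {p : V → V} (h : IsTF r p) {K : ℕ} (hK : K < Fintype.card V)
    (φ : ℕ → ℝ) (v : V) (c : ℝ) :
    psi K φ p v * c = if r ∈ desc p v then 0 else psi K φ p v * c := by
  split_ifs with hr
  · rw [h.root_mem_desc_iff] at hr
    rw [hr, psi, h.desc_root, Finset.card_univ, if_neg (by omega), zero_mul]
  · rfl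

lemma sum_range_truncate {n K : ℕ} (hK : K < n) (c h : ℕ → ℝ) (h0 : h 0 = 0) :
    ∑ j ∈ Finset.range n, c j * (if j ≤ K then h j else 0) =
      ∑ k ∈ Finset.Icc 1 K, c k * h k := by
  symm
  have hsub : Finset.Icc 1 K ⊆ Finset.range n := by
    intro k hk
    rw [Finset.mem_Icc] at hk
    rw [Finset.mem_range]; omega
  rw [← Finset.sum_subset hsub (f := fun j => c j * (if j ≤ K then h j else 0))]
  · refine Finset.sum_congr rfl fun k hk => ?_
    rw [if_pos (Finset.mem_Icc.1 hk).2]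
  · intro k _ hk
    rw [Finset.mem_Icc] at hk
    rcases Nat.eq_zero_or_pos k with h | h
    · subst h; simp [h0]
    · rw [if_neg (by omega), mul_zero]

/-- The sum of `Zsum` over all trees on `n` vertices; see `first_moment`. -/
noncomputable def M1 (K : ℕ) (φ : ℕ → ℝ) (n : ℕ) : ℝ :=
  ∑ k ∈ Finset.Icc 1 K, ((n - 1).choose k : ℝ) *
    (((n - k : ℕ) : ℝ) * ((n - k : ℕ) : ℝ) ^ (n - k - 2) * Gsum φ k)

lemma first_moment (r : V) {K : ℕ} (hK : K < Fintype.card V) (φ : ℕ → ℝ) :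
    ∑ p ∈ TF r, Zsum K φ p = M1 K φ (Fintype.card V) := by
  set n := Fintype.card V with hn
  have h1 : ∑ p ∈ TF r, Zsum K φ p =
      ∑ p ∈ TF r, ∑ v, if r ∈ desc p v then 0 else psi K φ p v * 1 := by
    refine Finset.sum_congr rfl fun p hp => ?_
    refine Finset.sum_congr rfl fun v _ => ?_
    rw [← (mem_TF.1 hp).psi_ite hK, mul_one]
  rw [h1, M1, ← sum_range_truncate hK _ _ (by rw [Gsum_zero, mul_zero])]
  refine fringe_total_eq r _ (fun j => if j ≤ K then
    ((n - j : ℕ) : ℝ) * ((n - j : ℕ) : ℝ) ^ (n - j - 2) * Gsum φ j else 0) ?_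
  intro S hr
  have h3 : ∀ w : {x // x ∈ S}, ∀ q ∈ TF w,
      (∑ p ∈ TF (⟨r, hr⟩ : {x // x ∉ S}), ∑ b : {x // x ∉ S},
        psi K φ ((splitEquiv S).conj (glue q w p b)) w * 1) =
      if S.card ≤ K then ((n - S.card : ℕ) : ℝ) * ((n - S.card : ℕ) : ℝ) ^ (n - S.card - 2) *
        φ (gnum q w) else 0 := by
    intro w q hq
    have hq := mem_TF.1 hq
    simp only [psi, card_desc_split hq, gnum_split hq, Finset.sum_const, nsmul_eq_mul, card_TF,
      card_compl_subtype, Finset.card_univ, mul_one, ← hn]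
    split_ifs
    · push_cast; ring
    · simp
  rw [Finset.sum_congr rfl fun w _ => Finset.sum_congr rfl (h3 w)]
  split_ifs
  · simp only [← Finset.mul_sum]
    rw [sum_gnum_eq_Gsum, Fintype.card_coe]
  · simp

lemma abs_psi_le {K : ℕ} {φ : ℕ → ℝ} (hφ : ∀ g, |φ g| ≤ 1) (p : V → V) (v : V) :
    |psi K φ p v| ≤ 1 := by
  rw [psi]
  split_ifs
  · exact hφ _
  · simp

/-- Attaching a fixed small tree at a uniformly random vertex changes the sum `Zsum` by a bounded
amount on average. -/
lemma Zsum_glue_diff {A B : Type} [Fintype A] [Fintype B] {q : A → A} {v : A} (hq : IsTF v q)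
    (p : B → B) (K : ℕ) {φ : ℕ → ℝ} (hφ : ∀ g, |φ g| ≤ 1) :
    |∑ b, Zsum K φ (glue q v p b) - Fintype.card B * Zsum K φ p| ≤
      Fintype.card B * (Fintype.card A + 2 * K) := by
  have h1 : ∑ b, Zsum K φ (glue q v p b) - Fintype.card B * Zsum K φ p =
      ∑ b, (∑ a, psi K φ (glue q v p b) (Sum.inl a) +
        ∑ y, (psi K φ (glue q v p b) (Sum.inr y) - psi K φ p y)) := by
    rw [← Finset.card_univ, ← nsmul_eq_mul, ← Finset.sum_const, ← Finset.sum_sub_distrib]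
    refine Finset.sum_congr rfl fun b _ => ?_
    rw [Zsum, Zsum, Fintype.sum_sum_type, Finset.sum_sub_distrib]
    ring
  have h2 : ∀ b y, |psi K φ (glue q v p b) (Sum.inr y) - psi K φ p y| ≤
      if b ∈ desc p y then (if (desc p y).card ≤ K then 2 else 0) else 0 := by
    intro b y
    split_ifs with hb hc
    · refine (abs_sub _ _).trans ?_
      have e1 := abs_psi_le (K := K) hφ (glue q v p b) (Sum.inr y)
      have e2 := abs_psi_le (K := K) hφ p y
      linarith
    · have := card_desc_le_glue q v p b y
      rw [psi, psi, if_neg hc, if_neg (by omega)]; simp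
    · rw [psi, psi, gnum_glue_inr hq hb, desc_glue_inr hq hb, Finset.card_map]; simp
  have h3 : ∑ b, ∑ y, (if b ∈ desc p y then (if (desc p y).card ≤ K then (2 : ℝ) else 0) else 0) ≤
      Fintype.card B * (2 * K) := by
    rw [Finset.sum_comm, ← Finset.card_univ, ← nsmul_eq_mul, ← Finset.sum_const]
    refine Finset.sum_le_sum fun y _ => ?_
    rw [Finset.sum_ite_mem, Finset.univ_inter, Finset.sum_const, nsmul_eq_mul]
    split_ifs with hc
    · have : ((desc p y).card : ℝ) ≤ K := by exact_mod_cast hc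
      linarith
    · simp
  rw [h1]
  refine (Finset.abs_sum_le_sum_abs _ _).trans ?_
  have h4 : ∀ b ∈ (Finset.univ : Finset B), |∑ a, psi K φ (glue q v p b) (Sum.inl a) +
        ∑ y, (psi K φ (glue q v p b) (Sum.inr y) - psi K φ p y)| ≤ (Fintype.card A : ℝ) +
        ∑ y, (if b ∈ desc p y then (if (desc p y).card ≤ K then (2 : ℝ) else 0) else 0) := by
    intro b _
    refine (abs_add_le _ _).trans (add_le_add ?_ ?_)
    · refine (Finset.abs_sum_le_sum_abs _ _).trans ?_
      refine (Finset.sum_le_sum fun a _ => abs_psi_le hφ _ _).trans ?_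
      simp
    · exact (Finset.abs_sum_le_sum_abs _ _).trans (Finset.sum_le_sum fun y _ => h2 b y)
  refine (Finset.sum_le_sum h4).trans ?_
  rw [Finset.sum_add_distrib, Finset.sum_const, nsmul_eq_mul, Finset.card_univ, mul_add]
  linarith

/-- Removing a fringe subtree with at most `K` vertices leaves a uniform tree, and by `Zsum_glue_diff`
changes `Zsum` by `O(K)` on average; so the second moment is reduced to first moments. -/
lemma second_moment (r : V) {K : ℕ} (hK : 2 * K < Fintype.card V) {φ : ℕ → ℝ}
    (hφ : ∀ g, |φ g| ≤ 1) :
    ∑ p ∈ TF r, Zsum K φ p ^ 2 ≤ ∑ k ∈ Finset.Icc 1 K, ((Fintype.card V - 1).choose k : ℝ) *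
      (((Fintype.card V - k : ℕ) : ℝ) * (Gsum φ k * M1 K φ (Fintype.card V - k) +
        Gsum (fun _ => 1) k * (3 * K *
          ((Fintype.card V - k : ℕ) : ℝ) ^ (Fintype.card V - k - 2)))) := by
  set n := Fintype.card V with hn
  have h1 : ∑ p ∈ TF r, Zsum K φ p ^ 2 =
      ∑ p ∈ TF r, ∑ v, if r ∈ desc p v then 0 else psi K φ p v * Zsum K φ p := by
    refine Finset.sum_congr rfl fun p hp => ?_
    rw [sq]
    nth_rewrite 1 [Zsum]
    rw [Finset.sum_mul]
    refine Finset.sum_congr rfl fun v _ => ?_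
    rw [← (mem_TF.1 hp).psi_ite (by omega)]
  rw [h1, ← sum_range_truncate (n := n) (by omega) _ _ (by simp [Gsum_zero])]
  refine fringe_total_le r _ (fun j => if j ≤ K then
    ((n - j : ℕ) : ℝ) * (Gsum φ j * M1 K φ (n - j) + Gsum (fun _ => 1) j * (3 * K *
          ((n - j : ℕ) : ℝ) ^ (n - j - 2))) else 0) ?_
  intro S hr
  by_cases hS : S.card ≤ K
  swap
  · rw [if_neg hS]
    refine le_of_eq (Finset.sum_eq_zero fun w _ => Finset.sum_eq_zero fun q hq =>
      Finset.sum_eq_zero fun p _ => Finset.sum_eq_zero fun b _ => ?_)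
    rw [psi, card_desc_split (mem_TF.1 hq), if_neg hS, zero_mul]
  rw [if_pos hS]
  have hB : Fintype.card {x // x ∉ S} = n - S.card := card_compl_subtype S
  have hcS : (S.card : ℝ) ≤ K := by exact_mod_cast hS
  have h3 : ∀ w : {x // x ∈ S}, ∀ q ∈ TF w,
      (∑ p ∈ TF (⟨r, hr⟩ : {x // x ∉ S}), ∑ b : {x // x ∉ S},
        psi K φ ((splitEquiv S).conj (glue q w p b)) w *
          Zsum K φ ((splitEquiv S).conj (glue q w p b))) ≤
      ((n - S.card : ℕ) : ℝ) * M1 K φ (n - S.card) * φ (gnum q w) +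
        ((n - S.card : ℕ) : ℝ) * (3 * K * ((n - S.card : ℕ) : ℝ) ^ (n - S.card - 2)) * 1 := by
    intro w q hq
    have hq := mem_TF.1 hq
    have h4 : ∀ p ∈ TF (⟨r, hr⟩ : {x // x ∉ S}), (∑ b : {x // x ∉ S},
        psi K φ ((splitEquiv S).conj (glue q w p b)) w *
          Zsum K φ ((splitEquiv S).conj (glue q w p b))) ≤
        φ (gnum q w) * ((n - S.card : ℕ) : ℝ) * Zsum K φ p +
          ((n - S.card : ℕ) : ℝ) * (3 * K) := by
      intro p _
      simp only [psi, card_desc_split hq, gnum_split hq, if_pos hS, Zsum_conj]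
      rw [← Finset.mul_sum]
      have h5 := Zsum_glue_diff hq p K hφ
      rw [hB, Fintype.card_coe] at h5
      set D := ∑ b, Zsum K φ (glue q w p b) - ((n - S.card : ℕ) : ℝ) * Zsum K φ p with hD
      have h6 : φ (gnum q w) * D ≤ ((n - S.card : ℕ) : ℝ) * (3 * K) := by
        refine (le_abs_self _).trans ?_
        rw [abs_mul]
        have h7 : |φ (gnum q w)| * |D| ≤ 1 * |D| :=
          mul_le_mul_of_nonneg_right (hφ _) (abs_nonneg _)
        have h8 : ((n - S.card : ℕ) : ℝ) * (S.card + 2 * K) ≤ ((n - S.card : ℕ) : ℝ) * (3 * K) :=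
          mul_le_mul_of_nonneg_left (by linarith) (Nat.cast_nonneg _)
        linarith
      have h9 : ∑ b, Zsum K φ (glue q w p b) = D + ((n - S.card : ℕ) : ℝ) * Zsum K φ p := by
        rw [hD]; ring
      rw [h9]
      linarith
    refine (Finset.sum_le_sum h4).trans (le_of_eq ?_)
    rw [Finset.sum_add_distrib, ← Finset.mul_sum, first_moment _ (by rw [hB]; omega), hB,
      Finset.sum_const, card_TF, hB, nsmul_eq_mul]
    push_cast
    ring
  refine (Finset.sum_le_sum fun w _ => Finset.sum_le_sum (h3 w)).trans (le_of_eq ?_)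
  simp only [Finset.sum_add_distrib, ← Finset.mul_sum]
  rw [sum_gnum_eq_Gsum φ, sum_gnum_eq_Gsum (fun _ => 1), Fintype.card_coe]
  ring

lemma Gsum_one (k : ℕ) (hk : 1 ≤ k) : Gsum (fun _ => 1) k = (k : ℝ) ^ (k - 1) := by
  simp only [Gsum, Finset.sum_const, card_TF, Fintype.card_fin, nsmul_eq_mul, mul_one,
    Finset.card_univ]
  push_cast
  rcases Nat.lt_or_ge k 2 with h | h
  · have : k = 1 := by omega
    simp [this]
  · rw [← pow_succ']; congr 1; omega

end Moments

/-! ### The deterministic bound and the constant -/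

section Identity

/-- The toll `log (g / (g - 1)) - log 2`, the gain over the factor `2` at a vertex with fringe value
`g`. It is set to `0` for `g < 2`, values that no fringe subtree takes. -/
noncomputable def phi (g : ℕ) : ℝ :=
  if 2 ≤ g then Real.log g - Real.log ((g : ℝ) - 1) - Real.log 2 else 0

lemma phi_bounds {g : ℕ} (hg : 2 ≤ g) : -Real.log 2 ≤ phi g ∧ phi g ≤ 0 := by
  have hg' : (2 : ℝ) ≤ g := by exact_mod_cast hg
  rw [phi, if_pos hg]
  have h1 : Real.log ((g : ℝ) - 1) ≤ Real.log g := Real.log_le_log (by linarith) (by linarith)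
  have h2 : Real.log g ≤ Real.log (2 * ((g : ℝ) - 1)) :=
    Real.log_le_log (by linarith) (by linarith)
  rw [Real.log_mul (by norm_num) (by linarith)] at h2
  constructor <;> linarith

lemma abs_phi_le (g : ℕ) : |phi g| ≤ 1 := by
  by_cases hg : 2 ≤ g
  · have h := phi_bounds hg
    have h2 : Real.log 2 ≤ 1 := by
      have := Real.log_le_sub_one_of_pos (show (0 : ℝ) < 2 by norm_num)
      linarith
    rw [abs_le]; constructor <;> linarith
  · simp [phi, hg]

lemma two_mul_exp_phi {g : ℕ} (hg : 2 ≤ g) : 2 * Real.exp (phi g) * ((g : ℝ) - 1) = g := by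
  have hg' : (2 : ℝ) ≤ g := by exact_mod_cast hg
  rw [phi, if_pos hg, Real.exp_sub, Real.exp_sub, Real.exp_log (by linarith),
    Real.exp_log (by linarith), Real.exp_log (by norm_num)]
  have : (g : ℝ) - 1 ≠ 0 := by linarith
  field_simp

/-- A vertex gets the factor `g / (g - 1)` if its fringe subtree has at most `K` vertices, and the
factor `2` otherwise. -/
lemma IsTF.gnum_le_exp {V : Type} [Fintype V] {r : V} {p : V → V} (h : IsTF r p) (K : ℕ) (v : V) :
    (gnum p v : ℝ) ≤ Real.exp (Fintype.card V * Real.log 2 + Zsum K phi p) := by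
  have hg : ∀ x, (2 : ℝ) ≤ gnum p x := fun x => by exact_mod_cast two_le_gnum p x
  have hα : ∀ x, (gnum p x : ℝ) ≤ 2 * Real.exp (psi K phi p x) * (gnum p x - 1) := by
    intro x
    rw [psi]
    split_ifs
    · rw [two_mul_exp_phi (two_le_gnum p x)]
    · have := hg x
      rw [Real.exp_zero]; linarith
  have h1 : ∀ x, 1 ≤ 2 * Real.exp (psi K phi p x) := by
    intro x
    by_contra hlt
    have := hg x
    nlinarith [hα x]
  refine (h.gnum_le_prod _ hα (fun x => by positivity) v).trans ?_
  have h2 : ∏ x ∈ desc p v, (2 * Real.exp (psi K phi p x)) ≤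
      ∏ x, (2 * Real.exp (psi K phi p x)) := by
    rw [← Finset.prod_sdiff (Finset.subset_univ (desc p v))]
    refine le_mul_of_one_le_left (Finset.prod_nonneg fun x _ => by positivity) ?_
    exact Finset.one_le_prod fun x _ => h1 x
  refine h2.trans (le_of_eq ?_)
  rw [Finset.prod_mul_distrib, Finset.prod_const, ← Real.exp_sum, Real.exp_add, Finset.card_univ,
    Real.exp_nat_mul, Real.exp_log (by norm_num), Zsum]

lemma IsTF.subtreeCount_le_exp {n : ℕ} {r : Fin n} {p : Fin n → Fin n} (h : IsTF r p) (K : ℕ) :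
    (subtreeCount (graphOf p) : ℝ) ≤ n * Real.exp (n * Real.log 2 + Zsum K phi p) := by
  have h1 : (subtreeCount (graphOf p) : ℝ) ≤ ∑ v, (gnum p v : ℝ) := by
    exact_mod_cast h.subtreeCount_le
  refine h1.trans ((Finset.sum_le_sum fun v _ => h.gnum_le_exp K v).trans ?_)
  simp

/-- The limit of the mean of `Zsum K phi` per vertex. -/
noncomputable def mu (K : ℕ) : ℝ :=
  ∑ k ∈ Finset.Icc 1 K, Real.exp (-(k : ℝ)) / (Nat.factorial k) * Gsum phi k

lemma Gsum_phi (k : ℕ) (hk : 1 ≤ k) : Gsum phi k =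
    Gsum (fun g => Real.log g) k - Gsum (fun g => Real.log ((g : ℝ) - 1)) k -
      Real.log 2 * (k : ℝ) ^ (k - 1) := by
  rw [← Gsum_one k hk]
  simp only [Gsum, Finset.mul_sum, ← Finset.sum_sub_distrib]
  refine Finset.sum_congr rfl fun v _ => Finset.sum_congr rfl fun q _ => ?_
  rw [phi, if_pos (two_le_gnum q v), mul_one]

/-- `filter_isTree_eq_image` for `Fin n`, with the decidability instances `Fin n` carries. -/
lemma filter_isTree_eq_image_fin {n : ℕ} (r : Fin n) :
    (Finset.univ.filter fun G : SimpleGraph (Fin n) => G.IsTree) = (TF r).image graphOf := by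
  convert filter_isTree_eq_image r

/-- The factor of `PK` for trees with `k` vertices. -/
lemma prod_tree_eq_exp (k : ℕ) (f : ℝ) :
    (∏ T : SimpleGraph (Fin k), ∏ v : Fin k, if T.IsTree then ((gval T v : ℝ)) ^ f else 1) =
      Real.exp (f * Gsum (fun g => Real.log g) k) := by
  rw [Finset.prod_comm, Gsum, Finset.mul_sum, Real.exp_sum]
  refine Finset.prod_congr rfl fun v _ => ?_
  rw [← Finset.prod_filter, filter_isTree_eq_image_fin v, Finset.prod_image (graphOf_injOn v),
    Finset.mul_sum, Real.exp_sum]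
  refine Finset.prod_congr rfl fun p hp => ?_
  have h2 : (2 : ℝ) ≤ gnum p v := by exact_mod_cast two_le_gnum p v
  rw [(mem_TF.1 hp).gval_eq, Real.rpow_def_of_pos (by linarith), mul_comm]

/-- Interchanging the two summations turns the correction terms of `fK` into the recursion
`Gsum_log_pred`. -/
lemma sum_fK (K : ℕ) :
    ∑ k ∈ Finset.Icc 1 K, fK K k * Gsum (fun g => Real.log g) k =
      ∑ k ∈ Finset.Icc 1 K, Real.exp (-(k : ℝ)) / (Nat.factorial k) *
        (Gsum (fun g => Real.log g) k - Gsum (fun g => Real.log ((g : ℝ) - 1)) k) := by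
  simp only [fK, sub_mul, mul_sub, Finset.sum_sub_distrib]
  congr 1
  have h1 : ∀ l ∈ Finset.Icc 1 K, Real.exp (-(l : ℝ)) / (Nat.factorial l) *
      Gsum (fun g => Real.log ((g : ℝ) - 1)) l =
      ∑ k ∈ Finset.Ico 1 l, ((l - k : ℕ) : ℝ) ^ (l - k - 1) * (Nat.choose l (l - k)) *
        Real.exp (-(l : ℝ)) / (Nat.factorial l) * Gsum (fun g => Real.log g) k := by
    intro l hl
    have hl := (Finset.mem_Icc.1 hl).1
    rw [Gsum_log_pred l hl, Finset.range_eq_Ico, Finset.sum_eq_sum_Ico_succ_bot (by omega),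
      Gsum_zero, mul_zero, zero_add, Finset.mul_sum]
    refine Finset.sum_congr rfl fun k _ => ?_
    ring
  rw [Finset.sum_congr rfl h1]
  simp only [Finset.sum_mul]
  refine Finset.sum_comm' fun k l => ?_
  simp only [Finset.mem_Icc, Finset.mem_Ico]
  omega

lemma two_rpow_mul_PK (K : ℕ) :
    (2 : ℝ) ^ (hfun K) * PK K = Real.exp (Real.log 2 + mu K) := by
  have h1 : PK K = Real.exp (∑ k ∈ Finset.Icc 1 K, fK K k * Gsum (fun g => Real.log g) k) := by
    rw [PK, Real.exp_sum]
    refine Finset.prod_congr rfl fun k _ => ?_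
    exact prod_tree_eq_exp k (fK K k)
  rw [h1, Real.rpow_def_of_pos (by norm_num), ← Real.exp_add, sum_fK, mu, hfun]
  congr 1
  rw [mul_sub, mul_one, sub_add, Finset.mul_sum, ← Finset.sum_sub_distrib, sub_eq_add_neg,
    ← Finset.sum_neg_distrib]
  congr 1
  refine Finset.sum_congr rfl fun k hk => ?_
  rw [Gsum_phi k (Finset.mem_Icc.1 hk).1]
  ring

end Identity

/-! ### Asymptotics and concentration -/

section Limit

/-- The expected proportion of vertices of a random tree on `n` vertices whose fringe subtree is one
given rooted labelled tree on `k` vertices, up to the choice of its labels: there are `C(n-1,k)` label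
sets, `n - k` points of attachment and `(n-k)^(n-k-2)` remaining trees. -/
noncomputable def rho (k n : ℕ) : ℝ :=
  ((n - 1).choose k : ℝ) * (((n - k : ℕ) : ℝ) * ((n - k : ℕ) : ℝ) ^ (n - k - 2)) /
    (n * (n : ℝ) ^ (n - 2))

/-- This is the Poisson limit theorem for `n - 1` trials with success probability `k / n`. -/
lemma tendsto_rho (k : ℕ) (hk : 1 ≤ k) :
    Tendsto (rho k) atTop (𝓝 (Real.exp (-(k : ℝ)) / (Nat.factorial k))) := by
  have hp : Tendsto (fun N : ℕ => (N : ℝ) * ((k : ℝ) / ((N : ℝ) + 1))) atTop (𝓝 (k : ℝ)) := by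
    have h := (tendsto_natCast_div_add_atTop (𝕜 := ℝ) 1).const_mul (k : ℝ)
    rw [mul_one] at h
    refine h.congr fun N => ?_
    ring
  have h := ProbabilityTheory.tendsto_choose_mul_pow_of_tendsto_mul_atTop k hp
  have hk0 : (k : ℝ) ≠ 0 := by exact_mod_cast (by omega : k ≠ 0)
  have h2 := h.div_const ((k : ℝ) ^ k)
  rw [← tendsto_add_atTop_iff_nat 1]
  have hlim : Real.exp (-(k : ℝ)) * (k : ℝ) ^ k / (Nat.factorial k) / (k : ℝ) ^ k =
      Real.exp (-(k : ℝ)) / (Nat.factorial k) := by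
    field_simp
  rw [hlim] at h2
  refine h2.congr' ?_
  filter_upwards [eventually_ge_atTop (k + 2)] with N hN
  have hN0 : (N : ℝ) + 1 ≠ 0 := by positivity
  obtain ⟨m, rfl⟩ : ∃ m, N = k + m + 1 := ⟨N - k - 1, by omega⟩
  rw [rho]
  have e1 : k + m + 1 + 1 - k = m + 2 := by omega
  have e2 : k + m + 1 + 1 - k - 2 = m := by omega
  have e3 : k + m + 1 + 1 - 2 = k + m := by omega
  have e4 : k + m + 1 - k = m + 1 := by omega
  rw [e2, e1, e3, e4, Nat.add_sub_cancel]
  push_cast at hN0 ⊢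
  have e5 : 1 - (k : ℝ) / (k + m + 1 + 1) = (m + 2) / (k + m + 1 + 1) := by
    field_simp; ring
  rw [e5, div_pow, div_pow]
  field_simp
  ring

/-- The mean of `Zsum` per vertex in a random tree on `n` vertices. -/
noncomputable def aseq (K : ℕ) (φ : ℕ → ℝ) (n : ℕ) : ℝ := M1 K φ n / (n * (n : ℝ) ^ (n - 2))

lemma aseq_eq (K : ℕ) (φ : ℕ → ℝ) (n : ℕ) :
    aseq K φ n = ∑ k ∈ Finset.Icc 1 K, rho k n * Gsum φ k := by
  rw [aseq, M1, Finset.sum_div]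
  refine Finset.sum_congr rfl fun k _ => ?_
  rw [rho]; ring

lemma tendsto_aseq (K : ℕ) : Tendsto (aseq K phi) atTop (𝓝 (mu K)) := by
  have : aseq K phi = fun n => ∑ k ∈ Finset.Icc 1 K, rho k n * Gsum phi k := by
    funext n; exact aseq_eq K phi n
  rw [this, mu]
  exact tendsto_finsetSum _ fun k hk =>
    (tendsto_rho k (Finset.mem_Icc.1 hk).1).mul_const _

/-- The bound of `second_moment` for `phi`, divided by `n ^ 2` and by the number of trees. -/
noncomputable def bseq (K n : ℕ) : ℝ :=
  ∑ k ∈ Finset.Icc 1 K, rho k n * (Gsum phi k * (aseq K phi (n - k) * (((n - k : ℕ) : ℝ) / n)) +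
    Gsum (fun _ => 1) k * (3 * K / n))

lemma tendsto_bseq (K : ℕ) : Tendsto (bseq K) atTop (𝓝 (mu K ^ 2)) := by
  have h : mu K ^ 2 = ∑ k ∈ Finset.Icc 1 K, Real.exp (-(k : ℝ)) / (Nat.factorial k) *
      (Gsum phi k * (mu K * 1) + Gsum (fun _ => 1) k * 0) := by
    rw [sq]
    nth_rewrite 1 [mu]
    rw [Finset.sum_mul]
    refine Finset.sum_congr rfl fun k _ => ?_
    ring
  rw [h]
  unfold bseq
  refine tendsto_finsetSum _ fun k hk => (tendsto_rho k (Finset.mem_Icc.1 hk).1).mul ?_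
  refine (((tendsto_aseq K).comp (tendsto_sub_atTop_nat k)).mul ?_).const_mul _ |>.add ?_
  · rw [← tendsto_add_atTop_iff_nat k]
    have h := tendsto_natCast_div_add_atTop (𝕜 := ℝ) (k : ℝ)
    refine h.congr fun n => ?_
    rw [Nat.add_sub_cancel]; push_cast; rfl
  · exact (tendsto_const_div_atTop_nhds_zero_nat _).const_mul _

variable {V : Type} [Fintype V]

/-- Chebyshev's inequality for `Zsum K phi`, with the variance bounded through the two moments. -/
lemma chebyshev_bound (r : V) {K n : ℕ} (hn : Fintype.card V = n) (hK : 2 * K < n) {δ : ℝ}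
    (hδ : 0 < δ) :
    (((TF r).filter fun p => (mu K + δ) * n < Zsum K phi p).card : ℝ) / (TF r).card ≤
      (bseq K n - 2 * mu K * aseq K phi n + mu K ^ 2) / δ ^ 2 := by
  have hn0 : (0 : ℝ) < n := by exact_mod_cast (by omega : 0 < n)
  set N : ℝ := (n : ℝ) ^ (n - 2) with hN
  have hN0 : 0 < N := by positivity
  have hcard : ((TF r).card : ℝ) = N := by rw [card_TF, hn]; push_cast; rfl
  have h1 : ∑ p ∈ TF r, Zsum K phi p = aseq K phi n * (n * N) := by
    rw [first_moment r (by omega), hn, aseq, div_mul_cancel₀ _ (by positivity)]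
  have h2 : ∑ p ∈ TF r, Zsum K phi p ^ 2 ≤ bseq K n * (n ^ 2 * N) := by
    refine (second_moment r (by omega) abs_phi_le).trans (le_of_eq ?_)
    rw [hn, bseq, Finset.sum_mul]
    refine Finset.sum_congr rfl fun k hk => ?_
    have hk' := Finset.mem_Icc.1 hk
    have hnk : (0 : ℝ) < ((n - k : ℕ) : ℝ) := by exact_mod_cast (by omega : 0 < n - k)
    rw [rho, aseq, ← hN]
    field_simp
  have h3 : ∑ p ∈ TF r, (Zsum K phi p - mu K * n) ^ 2 ≤
      (bseq K n - 2 * mu K * aseq K phi n + mu K ^ 2) * (n ^ 2 * N) := by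
    have : ∑ p ∈ TF r, (Zsum K phi p - mu K * n) ^ 2 = ∑ p ∈ TF r, Zsum K phi p ^ 2 -
        2 * mu K * n * ∑ p ∈ TF r, Zsum K phi p + (mu K * n) ^ 2 * N := by
      rw [← hcard, mul_comm (_ ^ 2) (_ : ℝ), ← nsmul_eq_mul, ← Finset.sum_const, Finset.mul_sum,
        ← Finset.sum_sub_distrib, ← Finset.sum_add_distrib]
      exact Finset.sum_congr rfl fun p _ => by ring
    rw [this, h1]
    linarith
  have h4 : (((TF r).filter fun p => (mu K + δ) * n < Zsum K phi p).card : ℝ) * (δ * n) ^ 2 ≤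
      ∑ p ∈ TF r, (Zsum K phi p - mu K * n) ^ 2 := by
    rw [← nsmul_eq_mul, ← Finset.sum_const]
    refine (Finset.sum_le_sum fun p hp => ?_).trans
      (Finset.sum_le_sum_of_subset_of_nonneg (Finset.filter_subset _ _) fun p _ _ => sq_nonneg _)
    have := (Finset.mem_filter.1 hp).2
    exact pow_le_pow_left₀ (by positivity) (by linarith) 2
  rw [hcard, div_le_div_iff₀ hN0 (by positivity)]
  have h5 := h4.trans h3
  have hn2 : (0 : ℝ) < (n : ℝ) ^ 2 := by positivity
  refine le_of_mul_le_mul_right ?_ hn2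
  linarith

lemma one_sub_treeProb {n : ℕ} (r : Fin n) (P : SimpleGraph (Fin n) → Prop) :
    1 - treeProb n P =
      (((TF r).filter fun p => ¬ P (graphOf p)).card : ℝ) / (TF r).card := by
  have hc : (Nat.card {G : SimpleGraph (Fin n) // G.IsTree} : ℝ) = (TF r).card := by
    rw [Nat.card_eq_fintype_card, Fintype.card_subtype, filter_isTree_eq_image_fin r,
      Finset.card_image_of_injOn (graphOf_injOn r)]
  have hP : (Nat.card {G : SimpleGraph (Fin n) // G.IsTree ∧ P G} : ℝ) =
      ((TF r).filter fun p => P (graphOf p)).card := by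
    rw [Nat.card_eq_fintype_card, Fintype.card_subtype, ← Finset.filter_filter,
      filter_isTree_eq_image_fin r, Finset.filter_image, Finset.card_image_of_injOn]
    exact (graphOf_injOn r).mono (by intro p hp; simp at hp ⊢; exact hp.1)
  have hpos : (0 : ℝ) < (TF r).card := by
    rw [card_TF, Fintype.card_fin]
    have : 0 < n := r.pos
    exact_mod_cast Nat.pow_pos this
  have hsum := Finset.card_filter_add_card_filter_not (s := TF r) (fun p => P (graphOf p))
  rw [treeProb, hc, hP, eq_div_iff hpos.ne', sub_mul, div_mul_cancel₀ _ hpos.ne', one_mul,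
    sub_eq_iff_eq_add, add_comm]
  exact_mod_cast hsum.symm

end Limit

/-- For every fixed `K ≥ 1` and every `ε > 0`, a.a.s. `c(𝒯_n) ≤ (2^{h(K)} P_K + ε)^n`. -/
theorem aas_subtree_upper_bound_hK_PK (K : ℕ) (hK : 1 ≤ K) :
    ∀ ε : ℝ, 0 < ε →
      Tendsto (fun n : ℕ =>
        treeProb n (fun G =>
          (subtreeCount G : ℝ) ≤ ((2 : ℝ) ^ (hfun K) * PK K + ε) ^ n))
        atTop (𝓝 1) := by
  intro ε hε
  rw [two_rpow_mul_PK]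
  set L := Real.log 2 + mu K with hL
  -- one `δ` pays for the polynomial factor `n`, the other for the fluctuations of `Zsum`
  obtain ⟨δ, hδ, hδε⟩ : ∃ δ : ℝ, 0 < δ ∧ Real.exp (L + 2 * δ) ≤ Real.exp L + ε := by
    refine ⟨(Real.log (Real.exp L + ε) - L) / 2, ?_, ?_⟩
    · have : L < Real.log (Real.exp L + ε) := by
        rw [Real.lt_log_iff_exp_lt (by positivity)]; linarith
      linarith
    · rw [mul_div_cancel₀ _ (by norm_num), add_sub_cancel, Real.exp_log (by positivity)]
  have hcheb : Tendsto (fun n => (bseq K n - 2 * mu K * aseq K phi n + mu K ^ 2) / δ ^ 2)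
      atTop (𝓝 0) := by
    have h := (((tendsto_bseq K).sub ((tendsto_aseq K).const_mul (2 * mu K))).add_const
      (mu K ^ 2)).div_const (δ ^ 2)
    have h0 : (mu K ^ 2 - 2 * mu K * mu K + mu K ^ 2) / δ ^ 2 = 0 := by ring
    rwa [h0] at h
  have hexp : ∀ᶠ n : ℕ in atTop, (n : ℝ) ≤ Real.exp (δ * n) := by
    have h := (Real.tendsto_exp_div_pow_atTop 1).comp
      ((tendsto_natCast_atTop_atTop (R := ℝ)).const_mul_atTop hδ)
    filter_upwards [h.eventually_ge_atTop δ⁻¹, eventually_gt_atTop 0] with n hn hn0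
    have hn0' : (0 : ℝ) < n := by exact_mod_cast hn0
    simp only [Function.comp, pow_one] at hn
    rw [le_div_iff₀ (by positivity), ← mul_assoc, inv_mul_cancel₀ hδ.ne', one_mul] at hn
    exact hn
  have hmain : Tendsto (fun n : ℕ => 1 - treeProb n (fun G =>
      (subtreeCount G : ℝ) ≤ (Real.exp L + ε) ^ n)) atTop (𝓝 0) := by
    refine tendsto_of_tendsto_of_tendsto_of_le_of_le' tendsto_const_nhds hcheb ?_ ?_
    · filter_upwards [eventually_gt_atTop 0] with n hn
      rw [one_sub_treeProb ⟨0, hn⟩]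
      positivity
    · filter_upwards [eventually_gt_atTop (2 * K), hexp] with n hn hne
      have hn0 : 0 < n := by omega
      rw [one_sub_treeProb ⟨0, hn0⟩]
      refine le_trans ?_ (chebyshev_bound (⟨0, hn0⟩ : Fin n) (Fintype.card_fin n) hn hδ)
      refine div_le_div_of_nonneg_right ?_ (Nat.cast_nonneg _)
      refine Nat.cast_le.2 (Finset.card_le_card fun p hp => ?_)
      rw [Finset.mem_filter] at hp ⊢
      refine ⟨hp.1, ?_⟩
      by_contra hle
      refine hp.2 (((mem_TF.1 hp.1).subtreeCount_le_exp K).trans ?_)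
      calc (n : ℝ) * Real.exp (n * Real.log 2 + Zsum K phi p)
          ≤ Real.exp (δ * n) * Real.exp (n * Real.log 2 + (mu K + δ) * n) :=
            mul_le_mul hne (Real.exp_le_exp.2 (by linarith)) (Real.exp_pos _).le
              (Real.exp_pos _).le
        _ = Real.exp (L + 2 * δ) ^ n := by
            rw [← Real.exp_add, ← Real.exp_nat_mul, hL]; congr 1; ring
        _ ≤ (Real.exp L + ε) ^ n := pow_le_pow_left₀ (Real.exp_pos _).le hδε n
  have h := hmain.const_sub 1
  simpa using h
end

section
/- Fix k ≥ 1 and a pair (T,v) with T a labelled tree on {1,…,k} and v ∈ {1,…,k}. Let X be the number of vertices of 𝒯_n of type (T,v). Then for every ε > 0, the probability that (1−ε)·n·e^{−k}/k! ≤ X ≤ (1+ε)·n·e^{−k}/k! tends to 1 as n → ∞. -/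
/-!
The proof is by the second moment method. For `n > 2k` the vertices of type `(T, v)` in a tree
correspond to the `k`-element sets `S` carrying a pendant copy of `(T, v)` (`card_isOfType`), since
two distinct pendant sets of size `k` are disjoint (`disjoint_of_isPendant`).

The trees containing given disjoint pendant copies of a rooted tree are counted exactly by cutting
the copies off (`card_isPendant`): with `m` copies and `r` remaining vertices, such a tree is a tree
on the `r` vertices together with `m` attachment points, so there are `r ^ m * treeCount r` of them.
That the graph obtained by attaching copies of `T` is a tree exactly when the remaining graph is one
follows from a retraction argument for connectedness and an edge count (`attachTrees_isTree_iff`).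

Taken with one-vertex trees, this count gives the number of trees in which a prescribed set consists
of leaves, and inclusion–exclusion over leaves yields Cayley's formula (`treeCount_eq`). Taken with
one and with two copies of `(T, v)`, it gives the first two moments of the number `X` of pendant
copies (`sum_pendantCount`, `sum_pendantCount_sq`). By Cayley's formula, `E X / n` tends to
`c = e ^ (-k) / k!` and `E X ^ 2 / n ^ 2` to `c ^ 2`, so the mean of `(X / n - c) ^ 2` tends to `0`
(`tendsto_variance`), and Chebyshev's inequality concludes.
-/

open Filter Topology

/-- A vertex `u` of `G` is of type `(T, v)` if there is a `k`-element set `S ∋ u` such that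
exactly one edge of `G` joins `S` to its complement, that edge is incident to `u`, and the
unique order-preserving bijection `Fin k ≃ S` maps the edge set of `T` onto the edge set of
the subgraph of `G` induced by `S`, and maps `v` to `u`. -/
def IsOfType {n k : ℕ} (G : SimpleGraph (Fin n)) (T : SimpleGraph (Fin k)) (v : Fin k)
    (u : Fin n) : Prop :=
  ∃ (S : Finset (Fin n)) (h : S.card = k),
    u ∈ S ∧
    ((S.orderIsoOfFin h v : Fin n) = u) ∧
    (∀ i j : Fin k, T.Adj i j ↔ G.Adj (S.orderIsoOfFin h i) (S.orderIsoOfFin h j)) ∧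
    (∀ a b : Fin n, a ∈ S → b ∉ S → G.Adj a b → a = u) ∧
    (∃! b : Fin n, b ∉ S ∧ G.Adj u b)

/-! ### Attaching copies of a rooted tree -/

/-- The graph on `R ⊕ ι × K` made of `A` on `R` and, for every `i : ι`, a copy `{i} × K` of `T`
whose root `(i, v)` is joined by one edge to the vertex `f i` of `R`. -/
def attachTrees {R ι K : Type*} (T : SimpleGraph K) (v : K) (A : SimpleGraph R) (f : ι → R) :
    SimpleGraph (R ⊕ ι × K) where
  Adj
    | .inl a, .inl b => A.Adj a b
    | .inl a, .inr p => p.2 = v ∧ f p.1 = a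
    | .inr p, .inl a => p.2 = v ∧ f p.1 = a
    | .inr p, .inr q => p.1 = q.1 ∧ T.Adj p.2 q.2
  symm := ⟨by
    rintro (a | p) (b | q) h
    · exact A.adj_symm h
    · exact h
    · exact h
    · exact ⟨h.1.symm, T.adj_symm h.2⟩⟩
  loopless := ⟨by
    rintro (a | p) h
    · exact A.loopless.irrefl a h
    · exact T.loopless.irrefl p.2 h.2⟩

section attach
variable {R ι K : Type*} (T : SimpleGraph K) (v : K) (A : SimpleGraph R) (f : ι → R)

@[simp] lemma attachTrees_inl_inl (a b : R) :
    (attachTrees T v A f).Adj (.inl a) (.inl b) ↔ A.Adj a b := Iff.rfl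
@[simp] lemma attachTrees_inl_inr (a : R) (p : ι × K) :
    (attachTrees T v A f).Adj (.inl a) (.inr p) ↔ p.2 = v ∧ f p.1 = a := Iff.rfl
@[simp] lemma attachTrees_inr_inl (a : R) (p : ι × K) :
    (attachTrees T v A f).Adj (.inr p) (.inl a) ↔ p.2 = v ∧ f p.1 = a := Iff.rfl
@[simp] lemma attachTrees_inr_inr (p q : ι × K) :
    (attachTrees T v A f).Adj (.inr p) (.inr q) ↔ p.1 = q.1 ∧ T.Adj p.2 q.2 := Iff.rfl

/-- Connectedness passes from the attached graph to `A` along the retraction collapsing the `i`-th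
copy of `T` to `f i`; conversely each copy is joined to `R` through its root. -/
lemma attachTrees_connected_iff (hT : T.Connected) :
    (attachTrees T v A f).Connected ↔ A.Connected := by
  constructor
  · intro h
    have key : ∀ x y : R ⊕ ι × K, (attachTrees T v A f).Reachable x y →
        A.Reachable (Sum.elim id (fun p => f p.1) x) (Sum.elim id (fun p => f p.1) y) := by
      rintro x y ⟨w⟩
      induction w with
      | nil => exact .rfl
      | cons hadj _ ih =>
        refine .trans ?_ ih
        rename_i x y _ _
        rcases x with a | p <;> rcases y with b | q <;> simp at hadj ⊢
        · exact hadj.reachable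
        · rw [hadj.2]
        · rw [hadj.2]
        · rw [hadj.1]
    obtain ⟨x⟩ := h.nonempty
    have : Nonempty R := ⟨Sum.elim id (fun p => f p.1) x⟩
    exact ⟨fun a b => key (.inl a) (.inl b) (h.preconnected _ _)⟩
  · intro h
    obtain ⟨a₀⟩ := h.nonempty
    have hR : ∀ a b, (attachTrees T v A f).Reachable (.inl a) (.inl b) := fun a b =>
      (h.preconnected a b).map (G' := attachTrees T v A f) ⟨Sum.inl, fun h => h⟩
    have hK : ∀ p : ι × K, (attachTrees T v A f).Reachable (.inr p) (.inl (f p.1)) := fun p => by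
      have h1 := (hT.preconnected p.2 v).map (G' := attachTrees T v A f)
        ⟨fun x => Sum.inr (p.1, x), fun h => ⟨rfl, h⟩⟩
      have h2 : (attachTrees T v A f).Adj (.inr (p.1, v)) (.inl (f p.1)) := by simp
      exact h1.trans h2.reachable
    have all : ∀ x, (attachTrees T v A f).Reachable x (.inl a₀) := by
      rintro (a | p)
      · exact hR _ _
      · exact (hK p).trans (hR _ _)
    have : Nonempty (R ⊕ ι × K) := ⟨.inl a₀⟩
    exact ⟨fun x y => (all x).trans (all y).symm⟩

open Classical in
/-- The handshake lemma, as a double sum that splits along sum and product types. -/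
lemma two_mul_card_edgeSet {V : Type*} [Fintype V] (G : SimpleGraph V) :
    2 * Nat.card G.edgeSet = ∑ x, ∑ y, if G.Adj x y then 1 else 0 := by
  rw [Nat.card_eq_fintype_card, ← SimpleGraph.edgeFinset_card,
    ← G.sum_degrees_eq_twice_card_edges]
  refine Finset.sum_congr rfl fun x _ => ?_
  rw [← SimpleGraph.card_neighborFinset_eq_degree, SimpleGraph.neighborFinset_eq_filter,
    Finset.card_filter]

/-- Each attached copy of `T` adds `|K|` vertices and, being a tree plus one edge, `|K|` edges, so
the characterization of trees as connected graphs with one edge fewer than vertices applies to both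
sides simultaneously. -/
lemma attachTrees_isTree_iff [Finite R] [Finite ι] [Finite K] (hT : T.IsTree) :
    (attachTrees T v A f).IsTree ↔ A.IsTree := by
  classical
  have := Fintype.ofFinite R
  have := Fintype.ofFinite ι
  have := Fintype.ofFinite K
  rw [SimpleGraph.isTree_iff_connected_and_card, SimpleGraph.isTree_iff_connected_and_card,
    attachTrees_connected_iff T v A f hT.connected]
  refine and_congr_right fun _ => ?_
  have h0 := (SimpleGraph.isTree_iff_connected_and_card.1 hT).2
  have h1 := two_mul_card_edgeSet (attachTrees T v A f)
  have h2 := two_mul_card_edgeSet A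
  have h3 := two_mul_card_edgeSet T
  have e1 : ∑ x : R, ∑ i : ι, ∑ y : K, (if y = v ∧ f i = x then 1 else 0) = Fintype.card ι := by
    rw [Finset.sum_comm]
    simp [ite_and]
  have e2 : ∑ i : ι, ∑ y : K, ∑ x : R, (if y = v ∧ f i = x then 1 else 0) = Fintype.card ι := by
    simp [ite_and]
  have e3 : ∑ i : ι, ∑ x : K, ∑ j : ι, ∑ y : K, (if i = j ∧ T.Adj x y then 1 else 0)
      = Fintype.card ι * (2 * Nat.card T.edgeSet) := by
    rw [h3, ← smul_eq_mul, ← Finset.card_univ, ← Finset.sum_const]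
    refine Finset.sum_congr rfl fun i _ => Finset.sum_congr rfl fun x _ => ?_
    rw [Finset.sum_comm]
    simp [ite_and]
  simp only [Fintype.sum_sum_type, Fintype.sum_prod_type, attachTrees_inl_inl,
    attachTrees_inl_inr, attachTrees_inr_inl, attachTrees_inr_inr, Finset.sum_add_distrib,
    e1, e2, e3, ← h2] at h1
  simp only [Nat.card_sum, Nat.card_prod, ← h0, Nat.card_eq_fintype_card (α := ι)]
  rw [mul_add]
  rw [mul_left_comm] at h1
  omega
end attach

/-! ### Counting trees with prescribed pendant subtrees -/

/-- The range of `g` is a pendant copy of the rooted tree `(T, v)` in `G`: along `g`, which is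
injective in all uses, `G` induces `T`, and exactly one edge leaves the range, at `g v`. -/
structure IsPendant {V K : Type*} (G : SimpleGraph V) (T : SimpleGraph K) (v : K) (g : K → V) :
    Prop where
  adj_iff : ∀ x y, T.Adj x y ↔ G.Adj (g x) (g y)
  eq_root : ∀ x, ∀ b ∉ Set.range g, G.Adj (g x) b → x = v
  existsUnique : ∃! b, b ∉ Set.range g ∧ G.Adj (g v) b

/-- The number of labelled trees on `m` vertices; it is `0` for `m = 0`, since trees are
nonempty. -/
noncomputable def treeCount (m : ℕ) : ℕ := Nat.card {G : SimpleGraph (Fin m) // G.IsTree}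

lemma exists_crossing {V : Type*} {G : SimpleGraph V} (hG : G.Connected) (S : Set V) {a b : V}
    (ha : a ∈ S) (hb : b ∉ S) : ∃ x ∈ S, ∃ y ∉ S, G.Adj x y := by
  obtain ⟨p⟩ := hG.preconnected a b
  obtain ⟨d, -, h1, h2⟩ := p.exists_boundary_dart S ha hb
  exact ⟨d.fst, h1, d.snd, h2, d.adj⟩

lemma IsPendant.unique {V K : Type*} {G : SimpleGraph V} {T : SimpleGraph K} {v : K} {g : K → V}
    (h : IsPendant G T v g) {x y : K} {b c : V} (hb : b ∉ Set.range g) (hc : c ∉ Set.range g)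
    (hxb : G.Adj (g x) b) (hyc : G.Adj (g y) c) : x = v ∧ b = c := by
  obtain rfl := h.eq_root x b hb hxb
  obtain rfl := h.eq_root y c hc hyc
  exact ⟨rfl, h.existsUnique.unique ⟨hb, hxb⟩ ⟨hc, hyc⟩⟩

/-- Two disjoint pendant subtrees that do not exhaust a connected graph are not adjacent: an edge
between them would be the only exit of both, disconnecting their union from the rest. -/
lemma IsPendant.not_adj {V K : Type*} {G : SimpleGraph V} {T : SimpleGraph K} {v : K}
    {g g' : K → V} (hG : G.Connected) (h : IsPendant G T v g) (h' : IsPendant G T v g')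
    (hd : ∀ x y, g x ≠ g' y) (hw : ∃ w, w ∉ Set.range g ∧ w ∉ Set.range g') (x y : K) :
    ¬ G.Adj (g x) (g' y) := by
  intro hadj
  obtain ⟨w, hw1, hw2⟩ := hw
  have hg' : ∀ z, g' z ∉ Set.range g := by rintro z ⟨t, ht⟩; exact hd t z ht
  have hg : ∀ z, g z ∉ Set.range g' := by rintro z ⟨t, ht⟩; exact hd z t ht.symm
  obtain ⟨p, hp, q, hq, hpq⟩ := exists_crossing hG (Set.range g ∪ Set.range g') (a := g x)
    (b := w) (Or.inl ⟨x, rfl⟩) (by simp only [Set.mem_union]; tauto)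
  simp only [Set.mem_union, not_or] at hq
  rcases hp with ⟨z, rfl⟩ | ⟨z, rfl⟩
  · have := (h.unique hq.1 (hg' y) hpq hadj).2
    exact hq.2 ⟨y, this.symm⟩
  · have := (h'.unique hq.2 (hg x) hpq hadj.symm).2
    exact hq.1 ⟨x, this.symm⟩

lemma isPendant_attachTrees {R ι K : Type*} (T : SimpleGraph K) (v : K) (A : SimpleGraph R)
    (f : ι → R) (i : ι) :
    IsPendant (attachTrees T v A f) T v (fun x => Sum.inr (i, x)) where
  adj_iff x y := by simp
  eq_root x b hb h := by
    rcases b with b | ⟨j, y⟩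
    · exact h.1
    · simp only [attachTrees_inr_inr] at h
      exact absurd ⟨y, by rw [h.1]⟩ hb
  existsUnique := by
    refine ⟨.inl (f i), by simp, ?_⟩
    rintro (b | ⟨j, y⟩) ⟨hb, h⟩
    · simp at h; rw [h]
    · simp only [attachTrees_inr_inr] at h
      exact absurd ⟨y, by rw [h.1]⟩ hb

/-- A connected graph in which all the sets `{i} × K` are pendant copies of `(T, v)` arises by
attaching these copies to its restriction to `R`. -/
lemma exists_eq_attachTrees {R ι K : Type*} {T : SimpleGraph K} {v : K}
    {G : SimpleGraph (R ⊕ ι × K)} (hG : G.Connected)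
    (hP : ∀ i, IsPendant G T v (fun x => Sum.inr (i, x)))
    (hw : ∀ i j : ι, ∃ w : R ⊕ ι × K, w ∉ Set.range (fun x : K => (Sum.inr (i, x) : R ⊕ ι × K)) ∧
      w ∉ Set.range (fun x : K => (Sum.inr (j, x) : R ⊕ ι × K))) :
    ∃ f : ι → R, G = attachTrees T v (G.comap Sum.inl) f := by
  have hna : ∀ i j x y, i ≠ j → ¬ G.Adj (Sum.inr (i, x)) (Sum.inr (j, y)) := fun i j x y hij =>
    (hP i).not_adj hG (hP j) (by simp [hij]) (hw i j) x y
  have hf : ∀ i, ∃ r : R, G.Adj (Sum.inr (i, v)) (Sum.inl r) := by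
    intro i
    obtain ⟨b, ⟨hb, hadj⟩, -⟩ := (hP i).existsUnique
    rcases b with r | ⟨j, y⟩
    · exact ⟨r, hadj⟩
    · by_cases hij : i = j
      · exact absurd ⟨y, by rw [hij]⟩ hb
      · exact absurd hadj (hna _ _ _ _ hij)
  choose f hf using hf
  have hmix : ∀ a i x, G.Adj (Sum.inr (i, x)) (Sum.inl a) ↔ x = v ∧ f i = a := by
    intro a i x
    constructor
    · intro h
      obtain ⟨h1, h2⟩ := (hP i).unique (by simp) (by simp) h (hf i)
      exact ⟨h1, by simpa using h2.symm⟩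
    · rintro ⟨rfl, rfl⟩
      exact hf i
  refine ⟨f, ?_⟩
  ext x y
  rcases x with a | ⟨i, x⟩ <;> rcases y with b | ⟨j, y⟩
  · simp
  · rw [G.adj_comm, hmix]; simp
  · rw [hmix]; simp
  · rw [attachTrees_inr_inr]
    by_cases hij : i = j
    · subst hij
      simpa using ((hP i).adj_iff x y).symm
    · simp [hij, hna _ _ x y hij]

lemma attachTrees_injective {R ι K : Type*} {T : SimpleGraph K} {v : K} {A A' : SimpleGraph R}
    {f f' : ι → R} (h : attachTrees T v A f = attachTrees T v A' f') : A = A' ∧ f = f' := by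
  constructor
  · ext a b
    rw [← attachTrees_inl_inl T v A f, h, attachTrees_inl_inl]
  · funext i
    have : (attachTrees T v A f).Adj (.inr (i, v)) (.inl (f i)) := by simp
    rw [h] at this
    exact this.2.symm

lemma card_isPendant_sum {R ι K : Type*} [Finite R] [Finite ι] [Finite K] {T : SimpleGraph K}
    (hT : T.IsTree) (v : K)
    (hw : ∀ i j : ι, ∃ w : R ⊕ ι × K, w ∉ Set.range (fun x : K => (Sum.inr (i, x) : R ⊕ ι × K)) ∧
      w ∉ Set.range (fun x : K => (Sum.inr (j, x) : R ⊕ ι × K))) :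
    Nat.card {G : SimpleGraph (R ⊕ ι × K) //
        G.IsTree ∧ ∀ i, IsPendant G T v (fun x => Sum.inr (i, x))} =
      Nat.card R ^ Nat.card ι * Nat.card {A : SimpleGraph R // A.IsTree} := by
  rw [← Nat.card_fun, ← Nat.card_prod]
  symm
  refine Nat.card_congr (Equiv.ofBijective
    (fun q => ⟨attachTrees T v q.2.1 q.1, (attachTrees_isTree_iff T v _ _ hT).2 q.2.2,
      isPendant_attachTrees T v _ _⟩) ⟨?_, ?_⟩)
  · rintro ⟨f, A, hA⟩ ⟨f', A', hA'⟩ h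
    obtain ⟨h1, h2⟩ := attachTrees_injective (Subtype.ext_iff.1 h)
    simp only at h1 h2
    subst h1 h2
    rfl
  · rintro ⟨G, hG, hP⟩
    obtain ⟨f, hf⟩ := exists_eq_attachTrees hG.connected hP hw
    refine ⟨⟨f, G.comap Sum.inl, ?_⟩, Subtype.ext hf.symm⟩
    rw [hf] at hG
    exact (attachTrees_isTree_iff T v _ _ hT).1 hG

lemma isPendant_iso {V W K : Type*} {G : SimpleGraph V} {H : SimpleGraph W} (e : G ≃g H)
    {T : SimpleGraph K} {v : K} {g : K → V} (h : IsPendant G T v g) :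
    IsPendant H T v (fun x => e (g x)) where
  adj_iff x y := by rw [e.map_adj_iff]; exact h.adj_iff x y
  eq_root x b hb hadj := by
    obtain ⟨c, rfl⟩ := e.surjective b
    refine h.eq_root x c ?_ (e.map_adj_iff.1 hadj)
    rintro ⟨y, rfl⟩; exact hb ⟨y, rfl⟩
  existsUnique := by
    obtain ⟨b, ⟨hb, hadj⟩, hu⟩ := h.existsUnique
    refine ⟨e b, ⟨?_, e.map_adj_iff.2 hadj⟩, ?_⟩
    · rintro ⟨y, hy⟩; exact hb ⟨y, e.injective hy⟩
    · intro c ⟨hc, hadj⟩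
      obtain ⟨c, rfl⟩ := e.surjective c
      rw [hu c ⟨?_, e.map_adj_iff.1 hadj⟩]
      rintro ⟨y, rfl⟩; exact hc ⟨y, rfl⟩

/-- Relabelling a graph along a bijection of its vertices gives an isomorphic graph. -/
def simpleGraphIso {V W : Type*} (e : V ≃ W) (A : SimpleGraph V) : A ≃g e.simpleGraph A :=
  (SimpleGraph.Iso.comap e.symm A).symm

lemma card_trees_eq {R : Type*} [Finite R] :
    Nat.card {A : SimpleGraph R // A.IsTree} = treeCount (Nat.card R) := by
  refine Nat.card_congr ((Finite.equivFin R).simpleGraph.subtypeEquiv fun A => ?_)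
  exact (simpleGraphIso (Finite.equivFin R) A).isTree_iff

/-- The number of trees on `V` containing prescribed disjoint pendant copies `φ i` of `(T, v)`. Such
a tree amounts to a tree on the remaining vertices with a choice of attachment point for every
`i`. The hypothesis `hw` says that no two of the copies exhaust `V`; it allows all copies together
to do so, in which case both sides vanish. -/
theorem card_isPendant {V ι K : Type*} [Finite V] [Finite ι] [Finite K] {T : SimpleGraph K}
    (hT : T.IsTree) (v : K) (φ : ι → K → V) (hφ : Function.Injective (fun p : ι × K => φ p.1 p.2))
    (hw : ∀ i j : ι, ∃ w, w ∉ Set.range (φ i) ∧ w ∉ Set.range (φ j)) :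
    Nat.card {G : SimpleGraph V // G.IsTree ∧ ∀ i, IsPendant G T v (φ i)} =
      (Nat.card V - Nat.card ι * Nat.card K) ^ Nat.card ι *
        treeCount (Nat.card V - Nat.card ι * Nat.card K) := by
  let Φ : ι × K → V := fun p => φ p.1 p.2
  let R : Type _ := {w : V // w ∉ Set.range Φ}
  let e : R ⊕ ι × K ≃ V := Equiv.ofBijective (Sum.elim Subtype.val Φ) ⟨by
      rintro (⟨a, ha⟩ | p) (⟨b, hb⟩ | q) h
      · exact congrArg _ (Subtype.ext h)
      · exact absurd ⟨q, h.symm⟩ ha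
      · exact absurd ⟨p, h⟩ hb
      · exact congrArg _ (hφ h), by
      intro w
      by_cases hw : w ∈ Set.range Φ
      · obtain ⟨p, rfl⟩ := hw
        exact ⟨.inr p, rfl⟩
      · exact ⟨.inl ⟨w, hw⟩, rfl⟩⟩
  have he : ∀ i x, e (.inr (i, x)) = φ i x := fun _ _ => rfl
  have hcard : Nat.card R = Nat.card V - Nat.card ι * Nat.card K := by
    rw [← Nat.card_congr e, Nat.card_sum, Nat.card_prod]; omega
  rw [← hcard, ← card_trees_eq]
  rw [← card_isPendant_sum hT v]
  · symm
    refine Nat.card_congr (e.simpleGraph.subtypeEquiv fun A => ?_)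
    refine and_congr (simpleGraphIso e A).isTree_iff (forall_congr' fun i => ⟨?_, ?_⟩)
    · exact isPendant_iso (simpleGraphIso e A)
    · intro h
      have := isPendant_iso (simpleGraphIso e A).symm h
      convert this using 2 with x
      exact (e.symm_apply_apply _).symm
  · intro i j
    obtain ⟨w, h1, h2⟩ := hw i j
    refine ⟨e.symm w, ?_, ?_⟩
    · rintro ⟨x, hx⟩
      exact h1 ⟨x, by rw [← he]; exact (e.eq_symm_apply).1 hx⟩
    · rintro ⟨x, hx⟩
      exact h2 ⟨x, by rw [← he]; exact (e.eq_symm_apply).1 hx⟩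

/-! ### Cayley's formula -/

/-- Pendant one-vertex trees are leaves. -/
lemma isPendant_unit_iff {V : Type*} {G : SimpleGraph V} (l : V) :
    IsPendant G (⊥ : SimpleGraph Unit) () (fun _ => l) ↔ ∃! b, G.Adj l b := by
  have : ∀ b, (b ∉ Set.range (fun _ : Unit => l) ∧ G.Adj l b) ↔ G.Adj l b := by
    intro b
    simp only [Set.range_const, Set.mem_singleton_iff, and_iff_right_iff_imp]
    exact fun h => h.ne'
  constructor
  · intro h
    simpa only [this] using h.existsUnique
  · intro h
    exact ⟨by simp, by simp, by simpa only [this] using h⟩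

open Classical in
lemma card_trees_leaves {n : ℕ} (hn : 3 ≤ n) (s : Finset (Fin n)) :
    ({G : SimpleGraph (Fin n) | G.IsTree ∧ ∀ l ∈ s, ∃! b, G.Adj l b} : Finset _).card =
      (n - s.card) ^ s.card * treeCount (n - s.card) := by
  have h := card_isPendant (V := Fin n) (ι := s) (K := Unit) (T := ⊥) .of_subsingleton ()
    (fun i _ => i) (fun p q h => Prod.ext (Subtype.ext h) rfl) (by
      intro i j
      obtain ⟨w, hw⟩ : ∃ w, w ∉ ({i.1, j.1} : Finset (Fin n)) := by
        by_contra! hall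
        have h1 := Finset.card_le_card (fun w _ => hall w : Finset.univ ⊆ _)
        have h2 := Finset.card_le_two (a := i.1) (b := j.1)
        simp at h1
        omega
      refine ⟨w, ?_, ?_⟩ <;> simp_all)
  simp only [isPendant_unit_iff, Nat.card_eq_fintype_card, Fintype.card_coe, Fintype.card_unique,
    mul_one, Fintype.card_fin, Subtype.forall] at h
  rw [← h, Fintype.card_subtype]

/-- Inclusion–exclusion over the set of leaves, which is nonempty in every tree on at least two
vertices. -/
lemma alternating_sum_treeCount {n : ℕ} (hn : 3 ≤ n) :
    ∑ j ∈ Finset.range (n + 1),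
      (-1 : ℤ) ^ j * n.choose j * ((n - j : ℕ) ^ j * treeCount (n - j)) = 0 := by
  classical
  have : Nontrivial (Fin n) := Fin.nontrivial_iff_two_le.2 (by omega)
  have h0 : ∑ G : SimpleGraph (Fin n) with G.IsTree,
      ∑ s ∈ ({l | ∃! b, G.Adj l b} : Finset (Fin n)).powerset, (-1 : ℤ) ^ s.card = 0 := by
    refine Finset.sum_eq_zero fun G hG => ?_
    refine Finset.sum_powerset_neg_one_pow_card_of_nonempty ?_
    obtain ⟨l, hl⟩ := (Finset.mem_filter.1 hG).2.exists_vert_degree_one_of_nontrivial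
    exact ⟨l, by simpa using SimpleGraph.degree_eq_one_iff_existsUnique_adj.1 hl⟩
  have h1 : ∀ s : Finset (Fin n), (-1 : ℤ) ^ s.card *
      ((n - s.card : ℕ) ^ s.card * treeCount (n - s.card)) =
      ∑ G : SimpleGraph (Fin n) with G.IsTree,
        if s ∈ ({l | ∃! b, G.Adj l b} : Finset (Fin n)).powerset then (-1 : ℤ) ^ s.card else 0 := by
    intro s
    have h2 := card_trees_leaves hn s
    rw [← Finset.sum_filter, Finset.sum_const, Finset.filter_filter, nsmul_eq_mul, mul_comm]
    congr 1
    rw [← Nat.cast_pow, ← Nat.cast_mul, ← h2]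
    congr 3
    ext G
    simp [Finset.subset_iff]
  have h3 := Finset.sum_powerset_apply_card (x := (Finset.univ : Finset (Fin n)))
    (fun j => (-1 : ℤ) ^ j * ((n - j : ℕ) ^ j * treeCount (n - j)))
  rw [Finset.card_univ, Fintype.card_fin] at h3
  calc _ = _ := Finset.sum_congr rfl fun j _ => by
        rw [mul_right_comm, mul_comm, ← nsmul_eq_mul]
    _ = _ := h3.symm
    _ = _ := by
        rw [← h0]
        simp_rw [h1]
        rw [Finset.sum_comm]
        refine Finset.sum_congr rfl fun G _ => ?_
        rw [← Finset.sum_filter]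
        refine Finset.sum_congr ?_ fun _ _ => rfl
        ext s
        simp

lemma alternating_sum_pow {n d : ℕ} (hd : d < n) :
    ∑ j ∈ Finset.range (n + 1), (-1 : ℤ) ^ j * n.choose j * ((n - j : ℕ) : ℤ) ^ d = 0 := by
  have h := congrFun (fwdDiff_iter_pow_eq_zero_of_lt (R := ℤ) hd) 0
  rw [fwdDiff_iter_eq_sum_shift, ← Finset.sum_range_reflect, Pi.zero_apply] at h
  rw [← h]
  refine Finset.sum_congr rfl fun j hj => ?_
  have hj : j ≤ n := by simpa [Nat.lt_succ_iff] using hj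
  have e2 : n - (n - j) = j := by omega
  simp [e2, Nat.choose_symm hj]

/-- Cayley's formula. The numbers `n ^ (n - 2)` satisfy the recursion `alternating_sum_treeCount`
because the `n`-th finite difference of a polynomial of degree `n - 2` vanishes. For `n = 1` the
truncated exponent is `0`, which gives the correct value `1`. -/
theorem treeCount_eq {n : ℕ} (hn : 1 ≤ n) : treeCount n = n ^ (n - 2) := by
  induction n using Nat.strong_induction_on with
  | _ n ih =>
  rcases (by omega : n = 1 ∨ n = 2 ∨ 3 ≤ n) with rfl | rfl | h3
  · have : Unique {G : SimpleGraph (Fin 1) // G.IsTree} :=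
      ⟨⟨⟨⊥, .of_subsingleton⟩⟩, fun G => Subtype.ext (Subsingleton.elim _ _)⟩
    simp [treeCount]
  · have ht : (⊤ : SimpleGraph (Fin 2)).IsTree :=
      ⟨SimpleGraph.connected_top, .of_card_le_two (by simp)⟩
    have : Unique {G : SimpleGraph (Fin 2) // G.IsTree} :=
      ⟨⟨⟨⊤, ht⟩⟩, fun G => Subtype.ext (by
        have h01 : G.1.Adj 0 1 := by
          obtain ⟨x, hx, y, hy, hxy⟩ := exists_crossing G.2.connected {0} (a := 0) (b := 1)
            (by simp) (by simp)
          simp at hx hy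
          obtain rfl := hx
          obtain rfl : y = 1 := by omega
          exact hxy
        change G.1 = ⊤
        ext x y
        fin_cases x <;> fin_cases y <;> simp [h01, h01.symm])⟩
    simp [treeCount]
  · have h1 := alternating_sum_treeCount h3
    have h2 := alternating_sum_pow (show n - 2 < n by omega)
    rw [Finset.sum_range_succ'] at h1 h2
    have h4 : ∑ j ∈ Finset.range n, (-1 : ℤ) ^ (j + 1) * n.choose (j + 1) *
          ((n - (j + 1) : ℕ) ^ (j + 1) * treeCount (n - (j + 1))) =
        ∑ j ∈ Finset.range n, (-1 : ℤ) ^ (j + 1) * n.choose (j + 1) *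
          ((n - (j + 1) : ℕ) : ℤ) ^ (n - 2) := by
      refine Finset.sum_congr rfl fun j hj => ?_
      have hj := Finset.mem_range.1 hj
      congr 1
      rcases (by omega : n - (j + 1) = 0 ∨ n - (j + 1) = 1 ∨ 2 ≤ n - (j + 1)) with h | h | h
      · simp [h, show n - 2 ≠ 0 by omega]
      · rw [ih _ (by omega) (by omega)]
        simp [h]
      · rw [ih _ (by omega) (by omega), Nat.cast_pow, ← pow_add]
        congr 1
        omega
    rw [h4] at h1
    have h5 := h1.trans h2.symm
    simp at h5
    exact_mod_cast h5

/-! ### Moments of the number of pendant copies -/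

/-- Two pendant subtrees, neither inside the other, that do not cover a connected graph are disjoint.
If they met, each would have its only exit inside the other, so no edge would leave their
union. -/
lemma IsPendant.disjoint {V K : Type*} {G : SimpleGraph V} {T : SimpleGraph K} {v : K}
    {g g' : K → V} (hG : G.Connected) (hT : T.Connected) (h : IsPendant G T v g)
    (h' : IsPendant G T v g') (h1 : ¬ Set.range g ⊆ Set.range g')
    (h2 : ¬ Set.range g' ⊆ Set.range g) (hw : ∃ w, w ∉ Set.range g ∧ w ∉ Set.range g') :
    Disjoint (Set.range g) (Set.range g') := by
  rw [Set.disjoint_left]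
  rintro _ ⟨x₀, rfl⟩ ⟨y₀, hy₀⟩
  -- The connected set `range g` meets `range g'` and leaves it.
  have exit : ∀ {g g' : K → V} {x₀ y₀ : K}, IsPendant G T v g → g' y₀ = g x₀ →
      ¬ Set.range g ⊆ Set.range g' → ∃ p q, g q ∉ Set.range g' ∧ G.Adj (g' p) (g q) := by
    intro g g' x₀ y₀ h hy h1
    obtain ⟨_, ⟨a, rfl⟩, ha⟩ := Set.not_subset.1 h1
    obtain ⟨p, ⟨p', hp'⟩, q, hq, hpq⟩ := exists_crossing hT {x | g x ∈ Set.range g'}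
      (a := x₀) (b := a) ⟨y₀, hy⟩ ha
    exact ⟨p', q, hq, by rw [hp']; exact (h.adj_iff p q).1 hpq⟩
  obtain ⟨p, q, hq, hpq⟩ := exit h hy₀ h1
  obtain ⟨p', q', hq', hpq'⟩ := exit h' hy₀.symm h2
  obtain ⟨w, hw1, hw2⟩ := hw
  obtain ⟨s, hs, t, ht, hst⟩ := exists_crossing hG (Set.range g ∪ Set.range g') (a := g x₀)
    (b := w) (Or.inl ⟨x₀, rfl⟩) (by simp only [Set.mem_union]; tauto)
  simp only [Set.mem_union, not_or] at ht
  rcases hs with ⟨z, rfl⟩ | ⟨z, rfl⟩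
  · exact ht.2 ⟨q', (h.unique ht.1 hq' hst hpq').2.symm⟩
  · exact ht.1 ⟨q, (h'.unique ht.2 hq hst hpq).2.symm⟩

section moments
variable {n k : ℕ}

/-- The order-preserving enumeration of a `k`-element set of vertices. -/
def enum (S : {S : Finset (Fin n) // S.card = k}) (i : Fin k) : Fin n := S.1.orderIsoOfFin S.2 i

lemma enum_injective (S : {S : Finset (Fin n) // S.card = k}) : Function.Injective (enum S) :=
  fun _ _ h => (S.1.orderIsoOfFin S.2).injective (Subtype.ext h)

lemma mem_range_enum (S : {S : Finset (Fin n) // S.card = k}) (a : Fin n) :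
    a ∈ Set.range (enum S) ↔ a ∈ S.1 := by
  constructor
  · rintro ⟨i, rfl⟩
    exact (S.1.orderIsoOfFin S.2 i).2
  · intro h
    exact ⟨(S.1.orderIsoOfFin S.2).symm ⟨a, h⟩, by simp [enum]⟩

lemma isOfType_iff {G : SimpleGraph (Fin n)} {T : SimpleGraph (Fin k)} {v : Fin k} {u : Fin n} :
    IsOfType G T v u ↔
      ∃ S : {S : Finset (Fin n) // S.card = k}, IsPendant G T v (enum S) ∧ enum S v = u := by
  constructor
  · rintro ⟨S, h, hu, rfl, h1, h2, h3⟩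
    refine ⟨⟨S, h⟩, ⟨h1, ?_, ?_⟩, rfl⟩
    · intro x b hb hadj
      rw [mem_range_enum] at hb
      exact enum_injective ⟨S, h⟩ (h2 _ b (S.orderIsoOfFin h x).2 hb hadj)
    · simp only [mem_range_enum]
      exact h3
  · rintro ⟨⟨S, h⟩, hP, rfl⟩
    refine ⟨S, h, (S.orderIsoOfFin h v).2, rfl, hP.adj_iff, ?_, ?_⟩
    · intro a b ha hb hadj
      obtain ⟨x, rfl⟩ := (mem_range_enum ⟨S, h⟩ a).2 ha
      rw [hP.eq_root x b (by rwa [mem_range_enum]) hadj]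
    · have := hP.existsUnique
      simp only [mem_range_enum] at this
      exact this

lemma exists_notMem_range_enum (hn : 2 * k < n) (S S' : {S : Finset (Fin n) // S.card = k}) :
    ∃ w, w ∉ Set.range (enum S) ∧ w ∉ Set.range (enum S') := by
  simp only [mem_range_enum]
  by_contra! hall
  have h1 := Finset.card_le_card (t := S.1 ∪ S'.1) (fun w _ => by
    by_cases h : w ∈ S.1 <;> simp [h, hall w] : Finset.univ ⊆ _)
  have h2 := Finset.card_union_le S.1 S'.1
  have := S.2
  have := S'.2
  simp at h1
  omega

lemma disjoint_of_isPendant (hn : 2 * k < n) {G : SimpleGraph (Fin n)} {T : SimpleGraph (Fin k)}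
    {v : Fin k} (hG : G.Connected) (hT : T.Connected) {S S' : {S : Finset (Fin n) // S.card = k}}
    (h : IsPendant G T v (enum S)) (h' : IsPendant G T v (enum S')) (hne : S ≠ S') :
    Disjoint S.1 S'.1 := by
  have sub : ∀ A B : {S : Finset (Fin n) // S.card = k}, A ≠ B →
      ¬ Set.range (enum A) ⊆ Set.range (enum B) := by
    intro A B hAB hs
    refine hAB (Subtype.ext (Finset.eq_of_subset_of_card_le (fun a ha => ?_) ?_))
    · exact (mem_range_enum B a).1 (hs ((mem_range_enum A a).2 ha))
    · rw [A.2, B.2]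
  have := h.disjoint hG hT h' (sub _ _ hne) (sub _ _ hne.symm) (exists_notMem_range_enum hn S S')
  rw [Set.disjoint_left] at this
  simp only [mem_range_enum] at this
  exact Finset.disjoint_left.2 this

open Classical in
/-- The number of `k`-element vertex sets carrying a pendant copy of `(T, v)`. -/
noncomputable def pendantCount (G : SimpleGraph (Fin n)) (T : SimpleGraph (Fin k)) (v : Fin k) :
    ℕ :=
  ({S | IsPendant G T v (enum S)} : Finset {S : Finset (Fin n) // S.card = k}).card

/-- For `n > 2k` the pendant copies of `(T, v)` are disjoint, so that a vertex of type `(T, v)`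
determines the set witnessing it. -/
lemma card_isOfType (hn : 2 * k < n) {G : SimpleGraph (Fin n)} {T : SimpleGraph (Fin k)}
    {v : Fin k} (hG : G.Connected) (hT : T.Connected) :
    Nat.card {u : Fin n // IsOfType G T v u} = pendantCount G T v := by
  classical
  rw [pendantCount, ← Fintype.card_subtype, ← Nat.card_eq_fintype_card]
  symm
  refine Nat.card_congr (Equiv.ofBijective
    (fun S => ⟨enum S.1 v, isOfType_iff.2 ⟨S.1, S.2, rfl⟩⟩) ⟨?_, ?_⟩)
  · rintro ⟨S, hS⟩ ⟨S', hS'⟩ h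
    have h : enum S v = enum S' v := Subtype.ext_iff.1 h
    by_contra hne
    have := disjoint_of_isPendant hn hG hT hS hS' (fun h => hne (Subtype.ext h))
    refine Finset.disjoint_left.1 this ((mem_range_enum S _).1 ⟨v, rfl⟩) ?_
    rw [h]
    exact (mem_range_enum S' _).1 ⟨v, rfl⟩
  · rintro ⟨u, hu⟩
    obtain ⟨S, hS, rfl⟩ := isOfType_iff.1 hu
    exact ⟨⟨S, hS⟩, rfl⟩

open Classical in
lemma card_trees_isPendant (hn : 2 * k < n) {T : SimpleGraph (Fin k)} (hT : T.IsTree) (v : Fin k)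
    (S : {S : Finset (Fin n) // S.card = k}) :
    ({G | G.IsTree ∧ IsPendant G T v (enum S)} : Finset (SimpleGraph (Fin n))).card =
      (n - k) * treeCount (n - k) := by
  have h := card_isPendant (ι := Unit) hT v (fun _ => enum S)
    (fun p q h => Prod.ext rfl (enum_injective S h))
    (fun _ _ => exists_notMem_range_enum hn S S)
  simp only [forall_const, Nat.card_eq_fintype_card, Fintype.card_fin, Fintype.card_unique,
    one_mul, pow_one] at h
  rw [← h, Fintype.card_subtype]

open Classical in
lemma card_trees_isPendant_pair (hn : 2 * k < n) {T : SimpleGraph (Fin k)} (hT : T.IsTree)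
    (v : Fin k) {S S' : {S : Finset (Fin n) // S.card = k}} (hd : Disjoint S.1 S'.1) :
    ({G | G.IsTree ∧ IsPendant G T v (enum S) ∧ IsPendant G T v (enum S')} :
      Finset (SimpleGraph (Fin n))).card = (n - 2 * k) ^ 2 * treeCount (n - 2 * k) := by
  have hmem : ∀ (A : {S : Finset (Fin n) // S.card = k}) x, enum A x ∈ A.1 := fun A x =>
    (mem_range_enum A _).1 ⟨x, rfl⟩
  have h := card_isPendant (ι := Bool) hT v (fun b => enum (bif b then S else S'))
    (by
      rintro ⟨b, x⟩ ⟨c, y⟩ h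
      cases b <;> cases c <;> simp only [cond_true, cond_false] at h
      · rw [enum_injective _ h]
      · exact absurd (h ▸ hmem S' x) (Finset.disjoint_left.1 hd (hmem S y))
      · exact absurd (h ▸ hmem S' y) (Finset.disjoint_left.1 hd (hmem S x))
      · rw [enum_injective _ h])
    (fun _ _ => exists_notMem_range_enum hn _ _)
  simp only [Nat.card_eq_fintype_card, Fintype.card_fin, Fintype.card_bool] at h
  rw [← h, Fintype.card_subtype]
  congr 1
  ext G
  simp [and_comm]

lemma card_disjoint (S : {S : Finset (Fin n) // S.card = k}) :
    ({S' | Disjoint S.1 S'.1} : Finset {S : Finset (Fin n) // S.card = k}).card =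
      (n - k).choose k := by
  have : ({S' | Disjoint S.1 S'.1} : Finset {S : Finset (Fin n) // S.card = k}).map
      (Function.Embedding.subtype _) = Finset.powersetCard k S.1ᶜ := by
    ext A
    simp [Finset.mem_powersetCard, Finset.subset_compl_iff_disjoint_left]
  rw [← Finset.card_map, this, Finset.card_powersetCard, Finset.card_compl, S.2, Fintype.card_fin]

open Classical in
lemma sum_pendantCount (hn : 2 * k < n) {T : SimpleGraph (Fin k)} (hT : T.IsTree) (v : Fin k) :
    ∑ G : SimpleGraph (Fin n) with G.IsTree, pendantCount G T v =
      n.choose k * ((n - k) * treeCount (n - k)) := by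
  simp only [pendantCount, Finset.card_filter]
  rw [Finset.sum_comm]
  simp only [← Finset.card_filter, Finset.filter_filter, card_trees_isPendant hn hT v]
  simp

open Classical in
lemma sum_pendantCount_sq (hk : 1 ≤ k) (hn : 2 * k < n) {T : SimpleGraph (Fin k)} (hT : T.IsTree)
    (v : Fin k) :
    ∑ G : SimpleGraph (Fin n) with G.IsTree, pendantCount G T v ^ 2 =
      n.choose k * ((n - k) * treeCount (n - k)) +
        n.choose k * ((n - k).choose k * ((n - 2 * k) ^ 2 * treeCount (n - 2 * k))) := by
  have hpair : ∀ S S' : {S : Finset (Fin n) // S.card = k},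
      ({G | G.IsTree ∧ IsPendant G T v (enum S) ∧ IsPendant G T v (enum S')} :
        Finset (SimpleGraph (Fin n))).card =
      (if S = S' then (n - k) * treeCount (n - k) else 0) +
        (if Disjoint S.1 S'.1 then (n - 2 * k) ^ 2 * treeCount (n - 2 * k) else 0) := by
    intro S S'
    by_cases hd : Disjoint S.1 S'.1
    · have hne : S ≠ S' := by
        rintro rfl
        have := S.2
        rw [disjoint_self.1 hd] at this
        simp at this
        omega
      rw [card_trees_isPendant_pair hn hT v hd, if_neg hne, if_pos hd, zero_add]
    · by_cases he : S = S'
      · subst he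
        simp only [and_self, card_trees_isPendant hn hT v, if_true, if_neg hd, add_zero]
      · rw [if_neg he, if_neg hd, add_zero, Finset.card_eq_zero, Finset.filter_eq_empty_iff]
        rintro G - ⟨hG, h, h'⟩
        exact hd (disjoint_of_isPendant hn hG.connected hT.connected h h' he)
  simp only [pendantCount, sq, Finset.card_filter, Finset.sum_mul_sum, ite_zero_mul_ite_zero,
    mul_one]
  rw [Finset.sum_comm]
  simp_rw [Finset.sum_comm (s := Finset.filter _ _)]
  simp only [← Finset.card_filter, Finset.filter_filter]
  simp only [← sq, hpair, Finset.sum_add_distrib]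
  congr 1
  · simp
  · simp only [← Finset.sum_filter, Finset.sum_const, card_disjoint]
    simp

end moments

/-! ### Asymptotics -/

section asymptotics

lemma tendsto_sub_div (m : ℕ) :
    Tendsto (fun n : ℕ => ((n - m : ℕ) : ℝ) / n) atTop (𝓝 1) := by
  have h : Tendsto (fun n : ℕ => 1 - (m : ℝ) / n) atTop (𝓝 (1 - 0)) :=
    tendsto_const_nhds.sub (tendsto_const_div_atTop_nhds_zero_nat _)
  rw [sub_zero] at h
  refine h.congr' ?_
  filter_upwards [eventually_gt_atTop m] with n hn
  have : (n : ℝ) ≠ 0 := by exact_mod_cast (by omega : n ≠ 0)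
  rw [Nat.cast_sub hn.le]
  field_simp

lemma tendsto_sub_div_pow (m : ℕ) :
    Tendsto (fun n : ℕ => (((n - m : ℕ) : ℝ) / n) ^ n) atTop (𝓝 (Real.exp (-m))) := by
  refine (Real.tendsto_one_add_div_pow_exp (-m)).congr' ?_
  filter_upwards [eventually_gt_atTop m] with n hn
  have : (n : ℝ) ≠ 0 := by exact_mod_cast (by omega : n ≠ 0)
  rw [Nat.cast_sub hn.le]
  congr 1
  field_simp
  ring

lemma tendsto_choose_div_pow (k : ℕ) :
    Tendsto (fun n : ℕ => (n.choose k : ℝ) / (n : ℝ) ^ k) atTop (𝓝 (1 / k.factorial)) := by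
  have h := isEquivalent_choose k
  rw [Asymptotics.isEquivalent_iff_tendsto_one] at h
  · have h2 := h.mul_const (1 / (k.factorial : ℝ))
    rw [one_mul] at h2
    refine h2.congr' ?_
    filter_upwards [eventually_gt_atTop 0] with n hn
    have : (n : ℝ) ≠ 0 := by exact_mod_cast hn.ne'
    have : (k.factorial : ℝ) ≠ 0 := by exact_mod_cast k.factorial_ne_zero
    simp only [Pi.div_apply]
    field_simp
  · filter_upwards [eventually_gt_atTop 0] with n hn
    positivity

/-- The expectation of the number of pendant copies of `(T, v)`, divided by `n`. -/
lemma tendsto_first (k : ℕ) :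
    Tendsto (fun n : ℕ => (n.choose k * ((n - k : ℕ) * treeCount (n - k)) : ℝ) /
      (n * treeCount n)) atTop (𝓝 (Real.exp (-k) / k.factorial)) := by
  have h := ((tendsto_choose_div_pow k).mul (tendsto_sub_div_pow k)).div
    ((tendsto_sub_div k).pow (k + 1)) (by simp)
  have e : 1 / (k.factorial : ℝ) * Real.exp (-k) / 1 ^ (k + 1) = Real.exp (-k) / k.factorial := by
    rw [one_pow]; ring
  rw [e] at h
  refine h.congr' ?_
  filter_upwards [eventually_ge_atTop (k + 2)] with n hn
  obtain ⟨b, rfl⟩ := Nat.exists_eq_add_of_le hn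
  have e1 : k + 2 + b - k = b + 2 := by omega
  have e2 : k + 2 + b - 2 = b + k := by omega
  simp only [Pi.div_apply]
  rw [e1, treeCount_eq (by omega), treeCount_eq (by omega), e2, Nat.add_sub_cancel]
  push_cast
  have h1 : (k + 2 + b : ℝ) ≠ 0 := by positivity
  have h2 : (b + 2 : ℝ) ≠ 0 := by positivity
  generalize (k + 2 + b : ℝ) = x at *
  generalize (b + 2 : ℝ) = y at *
  simp only [pow_add, div_pow]
  field_simp

/-- The second factorial moment of the number of pendant copies of `(T, v)`, divided by `n ^ 2`. -/
lemma tendsto_second (k : ℕ) :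
    Tendsto (fun n : ℕ => (n.choose k * ((n - k).choose k *
        ((n - 2 * k : ℕ) ^ 2 * treeCount (n - 2 * k))) : ℝ) /
      (n ^ 2 * treeCount n)) atTop (𝓝 ((Real.exp (-k) / k.factorial) ^ 2)) := by
  have h := (((tendsto_choose_div_pow k).mul (((tendsto_choose_div_pow k).comp
    (tendsto_sub_atTop_nat k)).mul ((tendsto_sub_div k).pow k))).mul
      (tendsto_sub_div_pow (2 * k))).div ((tendsto_sub_div (2 * k)).pow (2 * k)) (by simp)
  have e : 1 / (k.factorial : ℝ) * (1 / (k.factorial : ℝ) * 1 ^ k) * Real.exp (-(2 * k : ℕ))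
      / 1 ^ (2 * k) = (Real.exp (-k) / k.factorial) ^ 2 := by
    rw [one_pow, one_pow, div_pow, ← Real.exp_nat_mul]
    push_cast
    ring_nf
  rw [e] at h
  refine h.congr' ?_
  filter_upwards [eventually_ge_atTop (2 * k + 2)] with n hn
  obtain ⟨b, rfl⟩ := Nat.exists_eq_add_of_le hn
  have e1 : 2 * k + 2 + b - k = b + 2 + k := by omega
  have e3 : 2 * k + 2 + b - 2 * k = b + 2 := by omega
  have e2 : 2 * k + 2 + b - 2 = b + 2 * k := by omega
  simp only [Pi.div_apply, Function.comp_apply]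
  rw [e3, e1, treeCount_eq (by omega), treeCount_eq (by omega), e2, Nat.add_sub_cancel]
  push_cast
  have h1 : (2 * k + 2 + b : ℝ) ≠ 0 := by positivity
  have h2 : (b + 2 : ℝ) ≠ 0 := by positivity
  have h3 : (b + 2 + k : ℝ) ≠ 0 := by positivity
  generalize ((2 * k + 2 + b).choose k : ℝ) = B₁
  generalize ((b + 2 + k).choose k : ℝ) = B₂
  generalize (b + 2 + k : ℝ) = z at *
  generalize (2 * k + 2 + b : ℝ) = x at *
  generalize (b + 2 : ℝ) = y at *
  simp only [two_mul, pow_add, div_pow]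
  field_simp

end asymptotics

open Classical in
/-- The mean squared deviation of `X / n` from `e ^ (-k) / k!` tends to `0`, where `X` is the number
of pendant copies of `(T, v)` in a uniformly random tree. -/
lemma tendsto_variance {k : ℕ} (hk : 1 ≤ k) {T : SimpleGraph (Fin k)} (hT : T.IsTree)
    (v : Fin k) :
    Tendsto (fun n : ℕ => (∑ G : SimpleGraph (Fin n) with G.IsTree,
      ((pendantCount G T v : ℝ) / n - Real.exp (-k) / k.factorial) ^ 2) / treeCount n)
      atTop (𝓝 0) := by
  set c : ℝ := Real.exp (-k) / k.factorial with hc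
  have h1 := tendsto_first k
  have h2 := tendsto_second k
  rw [← hc] at h1 h2
  have h3 := ((h1.mul (tendsto_const_div_atTop_nhds_zero_nat (1 : ℝ))).add h2).sub
    (h1.const_mul (2 * c))
  have h4 := h3.add_const (c ^ 2)
  have e : c * 0 + c ^ 2 - 2 * c * c + c ^ 2 = 0 := by ring
  rw [e] at h4
  refine h4.congr' ?_
  filter_upwards [eventually_gt_atTop (2 * k)] with n hn
  have hn0 : (n : ℝ) ≠ 0 := by exact_mod_cast (by omega : n ≠ 0)
  have ht0 : (treeCount n : ℝ) ≠ 0 := by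
    rw [treeCount_eq (by omega)]
    exact_mod_cast pow_ne_zero _ (by omega)
  have m1 := congrArg (Nat.cast : ℕ → ℝ) (sum_pendantCount hn hT v)
  have m2 := congrArg (Nat.cast : ℕ → ℝ) (sum_pendantCount_sq hk hn hT v)
  have m0 : ∑ G : SimpleGraph (Fin n) with G.IsTree, (1 : ℝ) = treeCount n := by
    rw [Finset.sum_const, nsmul_eq_mul, mul_one, treeCount, Nat.card_eq_fintype_card,
      Fintype.card_subtype]
  push_cast at m1 m2
  have expand : ∀ G : SimpleGraph (Fin n), ((pendantCount G T v : ℝ) / n - c) ^ 2 =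
      1 / n ^ 2 * (pendantCount G T v : ℝ) ^ 2 - 2 * c / n * (pendantCount G T v : ℝ) +
        c ^ 2 * 1 := by
    intro G; field_simp; ring
  simp_rw [expand, Finset.sum_add_distrib, Finset.sum_sub_distrib, ← Finset.mul_sum, m0, m1, m2]
  field_simp

/-- For a fixed tree `T` on `{1,…,k}` rooted at `v`, and every `ε > 0`, a.a.s. the number `X`
of vertices of `𝒯_n` of type `(T,v)` satisfies `(1-ε) n e^{-k}/k! ≤ X ≤ (1+ε) n e^{-k}/k!`. -/
theorem aas_type_count (k : ℕ) (hk : 1 ≤ k) (T : SimpleGraph (Fin k)) (hT : T.IsTree)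
    (v : Fin k) :
    ∀ ε : ℝ, 0 < ε →
      Tendsto (fun n : ℕ =>
        treeProb n (fun G =>
          (1 - ε) * n * Real.exp (-(k : ℝ)) / (Nat.factorial k) ≤
              (Nat.card {u : Fin n // IsOfType G T v u} : ℝ) ∧
          (Nat.card {u : Fin n // IsOfType G T v u} : ℝ) ≤
              (1 + ε) * n * Real.exp (-(k : ℝ)) / (Nat.factorial k)))
        atTop (𝓝 1) := by
  intro ε hε
  classical
  set c : ℝ := Real.exp (-k) / k.factorial with hc
  have hcpos : 0 < c := by positivity
  have hδ : 0 < ε * c := by positivity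
  have hvar := (tendsto_variance hk hT v).div_const ((ε * c) ^ 2)
  rw [zero_div, ← hc] at hvar
  have hlow := hvar.const_sub 1
  rw [sub_zero] at hlow
  refine tendsto_of_tendsto_of_tendsto_of_le_of_le' hlow tendsto_const_nhds ?_ ?_
  · filter_upwards [eventually_gt_atTop (2 * k)] with n hn
    have hn0 : (0 : ℝ) < n := by exact_mod_cast (by omega : 0 < n)
    have ht0 : (0 : ℝ) < treeCount n := by
      rw [treeCount_eq (by omega)]
      exact_mod_cast pow_pos (by omega) _
    rw [treeProb, Nat.card_eq_fintype_card, Fintype.card_subtype, ← treeCount, div_div,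
      mul_comm, ← div_div, le_div_iff₀ ht0, sub_mul, div_mul_cancel₀ _ ht0.ne', one_mul,
      sub_le_iff_le_add]
    set p : SimpleGraph (Fin n) → Prop := fun G =>
      (1 - ε) * n * Real.exp (-(k : ℝ)) / (Nat.factorial k) ≤
              (Nat.card {u : Fin n // IsOfType G T v u} : ℝ) ∧
          (Nat.card {u : Fin n // IsOfType G T v u} : ℝ) ≤
              (1 + ε) * n * Real.exp (-(k : ℝ)) / (Nat.factorial k) with hp
    -- Chebyshev's inequality.
    have hbad : (({G | G.IsTree ∧ ¬ p G} : Finset (SimpleGraph (Fin n))).card : ℝ) ≤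
        (∑ G : SimpleGraph (Fin n) with G.IsTree, ((pendantCount G T v : ℝ) / n - c) ^ 2) /
          (ε * c) ^ 2 := by
      rw [le_div_iff₀ (by positivity), ← nsmul_eq_mul, ← Finset.filter_filter]
      refine (Finset.card_nsmul_le_sum _ _ _ fun G hG => ?_).trans
        (Finset.sum_le_sum_of_subset_of_nonneg (Finset.filter_subset _ _)
          fun _ _ _ => sq_nonneg _)
      simp only [Finset.mem_filter, Finset.mem_univ, true_and] at hG
      obtain ⟨hG, hpG⟩ := hG
      have e1 : (1 - ε) * n * Real.exp (-(k : ℝ)) / (Nat.factorial k) = (c - ε * c) * n := by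
        rw [hc]; ring
      have e2 : (1 + ε) * n * Real.exp (-(k : ℝ)) / (Nat.factorial k) = (c + ε * c) * n := by
        rw [hc]; ring
      simp only [hp, card_isOfType hn hG.connected hT.connected, e1, e2, ← le_div_iff₀ hn0,
        ← div_le_iff₀ hn0] at hpG
      refine sq_le_sq.2 ?_
      rw [abs_of_pos hδ]
      by_contra! hlt
      obtain ⟨h1, h2⟩ := abs_lt.1 hlt
      exact hpG ⟨by linarith, by linarith⟩
    have htot : (treeCount n : ℝ) =
        ({G | G.IsTree ∧ p G} : Finset (SimpleGraph (Fin n))).card +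
          ({G | G.IsTree ∧ ¬ p G} : Finset (SimpleGraph (Fin n))).card := by
      have := Finset.card_filter_add_card_filter_not (s := {G : SimpleGraph (Fin n) | G.IsTree}) p
      rw [Finset.filter_filter, Finset.filter_filter] at this
      rw [treeCount, Nat.card_eq_fintype_card, Fintype.card_subtype, ← this, Nat.cast_add]
    linarith
  · refine Eventually.of_forall fun n => div_le_one_of_le₀ ?_ (by positivity)
    exact_mod_cast Nat.card_le_card_of_injective
      (Subtype.map id fun (G : SimpleGraph (Fin n)) (h : G.IsTree ∧ _) => h.1)
      (Subtype.map_injective _ Function.injective_id)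
end
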